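/- arXiv:1902.09034 — 3 statements merged into one kernel-verified Lean document; each statement's English description precedes it below -/
import Mathlib

section
/- Let α ∈ 𝕀 be an irrational power series. Then there exists ε > 0 such that Bad^ε(α) has Hausdorff dimension 1 if and only if α is singular on average. -/
/-!
Common setup: the field `𝔽_q((z⁻¹))` of formal power series over a finite field `K` of
cardinality `q`, modeled as the field `FF K` of formal Laurent series in `t = z⁻¹`,
together with its non-Archimedean norm, the embedding of the polynomial ring `𝔽_q[z]`,
distances to polynomial (vectors), Diophantine exponents, `Bad` sets, continued fractions
and best approximation sequences.
-/

open scoped Classical ENNReal NNReal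
open Filter

noncomputable section

set_option linter.unusedSectionVars false

namespace FPSDA

variable (K : Type*) [Field K] [Fintype K]

/-- The field `𝔽_q((z⁻¹))` of formal power series in `z⁻¹` over the finite field `K = 𝔽_q`,
modeled as the field of formal Laurent series in the variable `t = z⁻¹`. -/
def FF : Type _ := LaurentSeries K

instance : Field (FF K) := inferInstanceAs (Field (LaurentSeries K))

variable {K}

/-- The identity map, viewing an element of `𝔽_q((z⁻¹))` as a Laurent series in `t = z⁻¹`. -/
def toL (x : FF K) : LaurentSeries K := x

@[simp] lemma toL_zero : toL (0 : FF K) = 0 := rfl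
@[simp] lemma toL_add (x y : FF K) : toL (x + y) = toL x + toL y := rfl
@[simp] lemma toL_neg (x : FF K) : toL (-x) = -toL x := rfl
@[simp] lemma toL_sub (x y : FF K) : toL (x - y) = toL x - toL y := rfl
lemma toL_eq_zero {x : FF K} : toL x = 0 ↔ x = 0 := Iff.rfl

/-- The norm `‖x‖ = q ^ (deg x)` on `𝔽_q((z⁻¹))`, where
`deg x = - (order of x as a Laurent series in z⁻¹)`; `‖0‖ = 0`. -/
def fnorm (x : FF K) : ℝ :=
  if toL x = 0 then 0 else (Fintype.card K : ℝ) ^ (-(toL x).order)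

lemma one_le_q : (1 : ℝ) ≤ (Fintype.card K : ℝ) := by
  exact_mod_cast Fintype.card_pos

lemma fnorm_nonneg (x : FF K) : 0 ≤ fnorm x := by
  unfold fnorm
  split_ifs
  · exact le_refl 0
  · exact zpow_nonneg (by positivity) _

lemma fnorm_eq_zero {x : FF K} : fnorm x = 0 ↔ x = 0 := by
  unfold fnorm
  split_ifs with h
  · exact ⟨fun _ => toL_eq_zero.mp h, fun _ => rfl⟩
  · constructor
    · intro hc
      exact absurd hc (zpow_ne_zero _ (by
        have h0 : (0:ℝ) < (Fintype.card K : ℝ) := by positivity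
        exact ne_of_gt h0))
    · intro hc
      exact absurd (toL_eq_zero.mpr hc) h

lemma fnorm_neg (x : FF K) : fnorm (-x) = fnorm x := by
  unfold fnorm
  rw [toL_neg]
  simp [neg_eq_zero, HahnSeries.order_neg]

lemma fnorm_add_le (x y : FF K) : fnorm (x + y) ≤ max (fnorm x) (fnorm y) := by
  by_cases hxy : x + y = 0
  · rw [fnorm_eq_zero.mpr hxy]
    exact le_max_of_le_left (fnorm_nonneg x)
  by_cases hx : x = 0
  · rw [hx, zero_add]
    exact le_max_right _ _
  by_cases hy : y = 0
  · rw [hy, add_zero]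
    exact le_max_left _ _
  have horder : min (toL x).order (toL y).order ≤ (toL (x + y)).order := by
    rw [toL_add]
    exact HahnSeries.min_order_le_order_add (show toL x + toL y ≠ 0 from hxy)
  have h1 : fnorm (x + y) = (Fintype.card K : ℝ) ^ (-(toL (x+y)).order) := by
    unfold fnorm
    rw [if_neg (show toL (x + y) ≠ 0 from hxy)]
  rcases le_total (toL x).order (toL y).order with h | h
  · have h2 : (toL x).order ≤ (toL (x+y)).order := le_trans (by simp [min_eq_left h]) horder
    refine le_max_of_le_left ?_
    rw [h1]
    unfold fnorm
    rw [if_neg (show toL x ≠ 0 from hx)]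
    exact zpow_le_zpow_right₀ one_le_q (by omega)
  · have h2 : (toL y).order ≤ (toL (x+y)).order := le_trans (by simp [min_eq_right h]) horder
    refine le_max_of_le_right ?_
    rw [h1]
    unfold fnorm
    rw [if_neg (show toL y ≠ 0 from hy)]
    exact zpow_le_zpow_right₀ one_le_q (by omega)

/-- The (ultra)metric `dist x y = ‖x - y‖` on `𝔽_q((z⁻¹))`. -/
instance : MetricSpace (FF K) where
  dist x y := fnorm (x - y)
  dist_self x := by
    show fnorm (x - x) = 0
    rw [sub_self]
    exact fnorm_eq_zero.mpr rfl
  dist_comm x y := by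
    show fnorm (x - y) = fnorm (y - x)
    have h : x - y = -(y - x) := by ring
    rw [h, fnorm_neg]
  dist_triangle x y z := by
    show fnorm (x - z) ≤ fnorm (x - y) + fnorm (y - z)
    have h : x - z = (x - y) + (y - z) := by ring
    calc fnorm (x - z) ≤ max (fnorm (x - y)) (fnorm (y - z)) := by
          rw [h]; exact fnorm_add_le _ _
      _ ≤ fnorm (x - y) + fnorm (y - z) :=
        max_le (le_add_of_nonneg_right (fnorm_nonneg _)) (le_add_of_nonneg_left (fnorm_nonneg _))
  eq_of_dist_eq_zero := by
    intro x y h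
    have h' : x - y = 0 := fnorm_eq_zero.mp h
    exact sub_eq_zero.mp h'

instance : MeasurableSpace (FF K) := borel _
instance : BorelSpace (FF K) := ⟨rfl⟩

/-- The canonical embedding of the polynomial ring `𝔽_q[z]` into `𝔽_q((z⁻¹))`:
the variable `z` is sent to `t⁻¹ = single (-1) 1`. -/
def polyF (P : Polynomial K) : FF K :=
  Polynomial.aeval (HahnSeries.single (-1 : ℤ) (1 : K)) P

/-- Supremum norm of a vector with entries in `𝔽_q((z⁻¹))`. -/
def vnorm {ι : Type*} [Fintype ι] (v : ι → FF K) : ℝ := ⨆ i, fnorm (v i)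

/-- `⟨v⟩`, the distance from the vector `v` to the nearest polynomial vector. -/
def vdist {ι : Type*} [Fintype ι] (v : ι → FF K) : ℝ :=
  ⨅ y : ι → Polynomial K, vnorm (fun i => v i - polyF (y i))

/-- `⟨x⟩`, the distance from the scalar `x` to the nearest polynomial. -/
def sdist (x : FF K) : ℝ := ⨅ y : Polynomial K, fnorm (x - polyF y)

/-- The fractional part `{x} = Σ_{i ≥ 1} a_i z^{-i}` of `x = Σ_i a_i z^{-i}`. -/
def fracPart (x : FF K) : FF K :=
  (⟨fun i => if 1 ≤ i then (toL x).coeff i else 0, (toL x).isPWO_support'.mono (by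
      intro i hi
      by_cases h : (1:ℤ) ≤ i
      · simpa [Function.mem_support, h] using hi
      · simp [Function.mem_support, h] at hi)⟩ : LaurentSeries K)

/-- The integer part `[x] = Σ_{i ≤ 0} a_i z^{-i}` of `x = Σ_i a_i z^{-i}`, as a polynomial
in `z`. -/
def intPoly (x : FF K) : Polynomial K :=
  ∑ i ∈ Finset.range ((-(toL x).order).toNat + 1),
    Polynomial.monomial i ((toL x).coeff (-(i : ℤ)))

/-- `x ∈ 𝔽_q((z⁻¹))` is irrational if it is not in `𝔽_q(z)`, i.e. is not a ratio of two
polynomials in `z`. -/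
def FIrrational (x : FF K) : Prop :=
  ∀ P Q : Polynomial K, Q ≠ 0 → x * polyF Q ≠ polyF P

section Exponents

variable {m n : ℕ}

/-- The norm `‖x‖ = max_j ‖x_j‖` of a polynomial vector `x`. -/
def pnorm {ι : Type*} [Fintype ι] (x : ι → Polynomial K) : ℝ :=
  vnorm (fun i => (polyF (x i) : FF K))

/-- The system `⟨A x - θ⟩ ≤ H^{-ω}`, `‖x‖ ≤ H` has a polynomial solution `x`. -/
def Solv (A : Matrix (Fin n) (Fin m) (FF K)) (θ : Fin n → FF K) (ω H : ℝ) : Prop :=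
  ∃ x : Fin m → Polynomial K,
    vdist (A.mulVec (fun j => polyF (x j)) - θ) ≤ H ^ (-ω) ∧ pnorm x ≤ H

/-- The system `⟨A x⟩ ≤ H^{-ω}`, `‖x‖ ≤ H` has a nonzero polynomial solution `x`. -/
def SolvHom (A : Matrix (Fin n) (Fin m) (FF K)) (ω H : ℝ) : Prop :=
  ∃ x : Fin m → Polynomial K, x ≠ 0 ∧
    vdist (A.mulVec (fun j => polyF (x j))) ≤ H ^ (-ω) ∧ pnorm x ≤ H

/-- The inhomogeneous exponent `ω(A, θ)`: the supremum (in `[0,∞]`) of all `ω` such that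
for arbitrarily large `H` the system `⟨A x - θ⟩ ≤ H^{-ω}`, `‖x‖ ≤ H` has a polynomial
solution. -/
def omegaInhom (A : Matrix (Fin n) (Fin m) (FF K)) (θ : Fin n → FF K) : ℝ≥0∞ :=
  ⨆ (ω : ℝ) (_ : ∀ H₀ : ℝ, ∃ H : ℝ, H₀ ≤ H ∧ Solv A θ ω H), ENNReal.ofReal ω

/-- The uniform inhomogeneous exponent `ω̂(A, θ)`: as `ω(A, θ)`, but with a solution for
all sufficiently large `H`. -/
def omegaHatInhom (A : Matrix (Fin n) (Fin m) (FF K)) (θ : Fin n → FF K) : ℝ≥0∞ :=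
  ⨆ (ω : ℝ) (_ : ∃ H₀ : ℝ, ∀ H : ℝ, H₀ ≤ H → Solv A θ ω H), ENNReal.ofReal ω

/-- The homogeneous exponent `ω(A)`. -/
def omegaHom (A : Matrix (Fin n) (Fin m) (FF K)) : ℝ≥0∞ :=
  ⨆ (ω : ℝ) (_ : ∀ H₀ : ℝ, ∃ H : ℝ, H₀ ≤ H ∧ SolvHom A ω H), ENNReal.ofReal ω

/-- The uniform homogeneous exponent `ω̂(A)`. -/
def omegaHatHom (A : Matrix (Fin n) (Fin m) (FF K)) : ℝ≥0∞ :=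
  ⨆ (ω : ℝ) (_ : ∃ H₀ : ℝ, ∀ H : ℝ, H₀ ≤ H → SolvHom A ω H), ENNReal.ofReal ω

/-- `A` is non-degenerate: the `𝔽_q[z]`-module `Aᵀ 𝔽_q[z]ⁿ + 𝔽_q[z]^m ⊆ 𝔽_q((z⁻¹))^m` has
rank `m + n` over `𝔽_q[z]`, i.e. its `m + n` natural generators are linearly independent
over `𝔽_q[z]`; equivalently, no nonzero polynomial vector `u` makes `Aᵀ u` a polynomial
vector. -/
def Nondegenerate (A : Matrix (Fin n) (Fin m) (FF K)) : Prop :=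
  ∀ u : Fin n → Polynomial K,
    (∃ v : Fin m → Polynomial K,
      A.transpose.mulVec (fun i => polyF (u i)) = fun j => polyF (v j)) → u = 0

/-- `liminf_{x ∈ 𝔽_q[z]^m, ‖x‖ → ∞} ‖x‖^{m/n} ⟨A x - θ⟩`, computed in `[0, ∞]`. -/
def badLiminf (A : Matrix (Fin n) (Fin m) (FF K)) (θ : Fin n → FF K) : ℝ≥0∞ :=
  Filter.liminf
    (fun x : Fin m → Polynomial K =>
      ENNReal.ofReal ((pnorm x) ^ ((m : ℝ) / (n : ℝ)) *
        vdist (A.mulVec (fun j => polyF (x j)) - θ)))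
    (Filter.comap (fun x : Fin m → Polynomial K => pnorm x) Filter.atTop)

/-- The set `Bad^ε(A)` of `θ` in the unit polydisc `𝕀ⁿ` with
`liminf_{‖x‖ → ∞} ‖x‖^{m/n} ⟨A x - θ⟩ ≥ ε`. -/
def Bad (A : Matrix (Fin n) (Fin m) (FF K)) (ε : ℝ) : Set (Fin n → FF K) :=
  {θ | (∀ i, fnorm (θ i) < 1) ∧ ENNReal.ofReal ε ≤ badLiminf A θ}

/-- The set `Bad(A) = ⋃_{ε > 0} Bad^ε(A)`. -/
def BadAll (A : Matrix (Fin n) (Fin m) (FF K)) : Set (Fin n → FF K) :=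
  ⋃ (ε : ℝ) (_ : 0 < ε), Bad A ε

/-- `M(y) = ⟨Aᵀ y⟩` for a polynomial vector `y`. -/
def Mfun (A : Matrix (Fin n) (Fin m) (FF K)) (y : Fin n → Polynomial K) : ℝ :=
  vdist (A.transpose.mulVec (fun i => polyF (y i)))

/-- `y 1, y 2, …` is a sequence of best approximations related to `Aᵀ`:
`1 = Y_1 < Y_2 < ⋯`, `M_1 > M_2 > ⋯`, and `M(x) ≥ M_k` for every nonzero polynomial
vector `x` with `‖x‖ < Y_{k+1}` (the value `y 0` is irrelevant). -/
def IsBestApproxSeq (A : Matrix (Fin n) (Fin m) (FF K))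
    (y : ℕ → Fin n → Polynomial K) : Prop :=
  pnorm (y 1) = 1 ∧
  (∀ k, 1 ≤ k → pnorm (y k) < pnorm (y (k + 1))) ∧
  (∀ k, 1 ≤ k → Mfun A (y (k + 1)) < Mfun A (y k)) ∧
  (∀ k, 1 ≤ k → ∀ x : Fin n → Polynomial K, x ≠ 0 → pnorm x < pnorm (y (k + 1)) →
    Mfun A (y k) ≤ Mfun A x)

end Exponents

section Scalar

/-- The system `⟨ξ x - θ⟩ ≤ H^{-ω}`, `‖x‖ ≤ H` has a polynomial solution `x`. -/
def sSolv (ξ θ : FF K) (ω H : ℝ) : Prop :=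
  ∃ x : Polynomial K, sdist (ξ * polyF x - θ) ≤ H ^ (-ω) ∧ fnorm (polyF x) ≤ H

/-- The scalar inhomogeneous exponent `ω((ξ), θ)`. -/
def somegaInhom (ξ θ : FF K) : ℝ≥0∞ :=
  ⨆ (ω : ℝ) (_ : ∀ H₀ : ℝ, ∃ H : ℝ, H₀ ≤ H ∧ sSolv ξ θ ω H), ENNReal.ofReal ω

/-- The scalar uniform inhomogeneous exponent `ω̂((ξ), θ)`. -/
def somegaHatInhom (ξ θ : FF K) : ℝ≥0∞ :=
  ⨆ (ω : ℝ) (_ : ∃ H₀ : ℝ, ∀ H : ℝ, H₀ ≤ H → sSolv ξ θ ω H), ENNReal.ofReal ω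

/-- The scalar homogeneous exponent `ω((ξ))`. -/
def somegaHom (ξ : FF K) : ℝ≥0∞ :=
  ⨆ (ω : ℝ) (_ : ∀ H₀ : ℝ, ∃ H : ℝ, H₀ ≤ H ∧ ∃ x : Polynomial K, x ≠ 0 ∧
      sdist (ξ * polyF x) ≤ H ^ (-ω) ∧ fnorm (polyF x) ≤ H), ENNReal.ofReal ω

/-- `liminf_{x ∈ 𝔽_q[z], ‖x‖ → ∞} ‖x‖ ⟨α x - θ⟩`, computed in `[0, ∞]`. -/
def sBadLiminf (α θ : FF K) : ℝ≥0∞ :=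
  Filter.liminf
    (fun x : Polynomial K => ENNReal.ofReal (fnorm (polyF x) * sdist (α * polyF x - θ)))
    (Filter.comap (fun x : Polynomial K => fnorm (polyF x)) Filter.atTop)

/-- The set `Bad^ε(α)` of `θ ∈ 𝕀` with `liminf_{‖x‖ → ∞} ‖x‖ ⟨α x - θ⟩ ≥ ε`. -/
def sBad (α : FF K) (ε : ℝ) : Set (FF K) :=
  {θ | fnorm θ < 1 ∧ ENNReal.ofReal ε ≤ sBadLiminf α θ}

end Scalar

section CF

/-- The Gauss map `T x = 1/x - [1/x]` on `𝔽_q((z⁻¹))`. -/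
def gaussMap (x : FF K) : FF K := fracPart x⁻¹

/-- `pquot α k` is the `(k+1)`-st partial quotient `A_{k+1} = [1 / T^k α]` of the
continued fraction expansion of `α`. -/
def pquot (α : FF K) (k : ℕ) : Polynomial K := intPoly ((gaussMap^[k] α)⁻¹)

/-- `cfQ α k` is the denominator `Q_k` of the `k`-th convergent of the continued fraction
expansion of `α`: `Q_0 = 1`, `Q_1 = A_1`, `Q_{k+2} = A_{k+2} Q_{k+1} + Q_k`. -/
def cfQ (α : FF K) : ℕ → Polynomial K
  | 0 => 1
  | 1 => pquot α 0
  | (k + 2) => pquot α (k + 1) * cfQ α (k + 1) + cfQ α k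

/-- `α` is singular on average: for every `c > 0` the proportion of `l ∈ {1, …, N}` for
which `‖{Q α}‖ ≤ c 2^{-l}` has a solution `Q ∈ 𝔽_q[z]` with `0 < ‖Q‖ ≤ 2^l` tends to `1`
as `N → ∞`. -/
def SingularOnAverage (α : FF K) : Prop :=
  ∀ c : ℝ, 0 < c →
    Filter.Tendsto
      (fun N : ℕ =>
        (((Finset.Icc 1 N).filter (fun l : ℕ =>
            ∃ Q : Polynomial K, Q ≠ 0 ∧ fnorm (polyF Q) ≤ 2 ^ l ∧
              fnorm (fracPart (polyF Q * α)) ≤ c / 2 ^ l)).card : ℝ) / (N : ℝ))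
      Filter.atTop (nhds 1)

end CF

end FPSDA

open FPSDA MeasureTheory

namespace FPSDAx

variable {K : Type*} [Field K] [Fintype K]

/-- digit of index `i` (coefficient of `z^{-(i+1)}`). -/
def dig (x : FF K) (i : ℕ) : K := (toL x).coeff ((i : ℤ) + 1)

lemma dig_add (x y : FF K) (i : ℕ) : dig (x + y) i = dig x i + dig y i := by
  simp [dig]

lemma dig_sub (x y : FF K) (i : ℕ) : dig (x - y) i = dig x i - dig y i := by
  simp [dig]

lemma dig_neg (x : FF K) (i : ℕ) : dig (-x) i = -dig x i := by
  simp [dig]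

/-- the first `n` digits vanish -/
def ZZ (n : ℕ) (x : FF K) : Prop := ∀ i < n, dig x i = 0

lemma two_le_q : 2 ≤ Fintype.card K := Fintype.one_lt_card

lemma one_lt_qR : (1 : ℝ) < (Fintype.card K : ℝ) := by
  exact_mod_cast (Fintype.one_lt_card : 1 < Fintype.card K)

lemma fnorm_le_iff (x : FF K) (n : ℤ) :
    fnorm x ≤ (Fintype.card K : ℝ) ^ (-n) ↔ ∀ i < n, (toL x).coeff i = 0 := by
  have hq := one_lt_qR (K := K)
  unfold fnorm
  split_ifs with h
  · constructor
    · intro _ i _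
      rw [h]; rfl
    · intro _
      positivity
  · rw [zpow_le_zpow_iff_right₀ hq]
    constructor
    · intro hn i hi
      exact HahnSeries.coeff_eq_zero_of_lt_order (by omega)
    · intro hn
      by_contra hc
      exact h (HahnSeries.coeff_order_eq_zero.mp (hn _ (by omega)))

lemma fnorm_mul (x y : FF K) : fnorm (x * y) = fnorm x * fnorm y := by
  by_cases hx : x = 0
  · simp [hx, fnorm_eq_zero.mpr]
  by_cases hy : y = 0
  · simp [hy, fnorm_eq_zero.mpr]
  have hq := one_lt_qR (K := K)
  have hxy : x * y ≠ 0 := mul_ne_zero hx hy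
  unfold fnorm
  rw [if_neg (show toL x ≠ 0 from hx), if_neg (show toL y ≠ 0 from hy),
    if_neg (show toL (x * y) ≠ 0 from hxy), ← zpow_add₀ (by positivity)]
  congr 1
  have : (toL (x * y)).order = (toL x).order + (toL y).order :=
    HahnSeries.order_mul (x := toL x) (y := toL y) hx hy
  rw [this]; ring

lemma polyF_add (P Q : Polynomial K) : polyF (P + Q) = polyF P + polyF Q :=
  map_add (Polynomial.aeval (HahnSeries.single (-1 : ℤ) (1 : K))) P Q
lemma polyF_sub (P Q : Polynomial K) : polyF (P - Q) = polyF P - polyF Q :=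
  map_sub (Polynomial.aeval (HahnSeries.single (-1 : ℤ) (1 : K))) P Q
lemma polyF_mul (P Q : Polynomial K) : polyF (P * Q) = polyF P * polyF Q :=
  map_mul (Polynomial.aeval (HahnSeries.single (-1 : ℤ) (1 : K))) P Q

lemma polyF_eq_sum (P : Polynomial K) : polyF P =
    (∑ j ∈ Finset.range (P.natDegree + 1), HahnSeries.single (-(j : ℤ)) (P.coeff j) :
      LaurentSeries K) := by
  show Polynomial.aeval (HahnSeries.single (-1 : ℤ) (1 : K)) P = _
  rw [Polynomial.aeval_eq_sum_range]
  apply Finset.sum_congr rfl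
  intro j _
  rw [HahnSeries.single_pow, one_pow, Algebra.smul_def]
  simp [HahnSeries.C_apply, LaurentSeries.algebraMap_apply]

lemma coeff_polyF_mul (P : Polynomial K) (f : FF K) (i : ℤ) :
    (toL (polyF P * f)).coeff i =
      ∑ j ∈ Finset.range (P.natDegree + 1), P.coeff j * (toL f).coeff (i + j) := by
  have h : toL (polyF P * f) = (∑ j ∈ Finset.range (P.natDegree + 1),
      HahnSeries.single (-(j : ℤ)) (P.coeff j) * toL f : LaurentSeries K) := by
    rw [← Finset.sum_mul, ← polyF_eq_sum]; rfl
  rw [h, HahnSeries.coeff_sum]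
  apply Finset.sum_congr rfl
  intro j _
  have := HahnSeries.coeff_single_mul_add (r := P.coeff j) (x := toL f) (a := i + j) (b := -(j:ℤ))
  rw [← this]; congr 1; ring

lemma coeff_polyF (P : Polynomial K) (i : ℤ) :
    (toL (polyF P)).coeff i = if i ≤ 0 then P.coeff (-i).toNat else 0 := by
  have h : toL (polyF P) = (∑ j ∈ Finset.range (P.natDegree + 1),
      HahnSeries.single (-(j : ℤ)) (P.coeff j) : LaurentSeries K) := polyF_eq_sum P
  rw [h, HahnSeries.coeff_sum]
  simp only [HahnSeries.coeff_single]
  split_ifs with hi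
  · obtain ⟨k, rfl⟩ : ∃ k : ℕ, i = -(k : ℤ) := ⟨(-i).toNat, by omega⟩
    simp only [neg_neg, Int.toNat_natCast, neg_inj, Nat.cast_inj]
    rw [Finset.sum_ite_eq]
    split_ifs with hk
    · rfl
    · symm
      apply Polynomial.coeff_eq_zero_of_natDegree_lt
      simp at hk; omega
  · apply Finset.sum_eq_zero
    intro j _
    rw [if_neg (by omega)]

lemma dig_polyF (P : Polynomial K) (i : ℕ) : dig (polyF P) i = 0 := by
  rw [dig, coeff_polyF, if_neg (by omega)]

lemma dig_polyF_mul (P : Polynomial K) (f : FF K) (i : ℕ) :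
    dig (polyF P * f) i =
      ∑ j ∈ Finset.range (P.natDegree + 1), P.coeff j * dig f (i + j) := by
  rw [dig, coeff_polyF_mul]
  apply Finset.sum_congr rfl
  intro j _
  rw [dig]; congr 2; push_cast; ring

lemma ZZ_polyF_mul {P : Polynomial K} {f : FF K} {a k : ℕ} (hP : P.natDegree ≤ a)
    (hf : ZZ (a + k) f) : ZZ k (polyF P * f) := by
  intro i hi
  rw [dig_polyF_mul]
  apply Finset.sum_eq_zero
  intro j hj
  simp at hj
  rw [hf _ (by omega), mul_zero]

lemma ZZ_add {n : ℕ} {x y : FF K} (hx : ZZ n x) (hy : ZZ n y) : ZZ n (x + y) := by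
  intro i hi; rw [dig_add, hx i hi, hy i hi, add_zero]
lemma ZZ_sub {n : ℕ} {x y : FF K} (hx : ZZ n x) (hy : ZZ n y) : ZZ n (x - y) := by
  intro i hi; rw [dig_sub, hx i hi, hy i hi, sub_zero]
lemma ZZ_mono {m n : ℕ} {x : FF K} (h : m ≤ n) (hx : ZZ n x) : ZZ m x :=
  fun i hi => hx i (by omega)

lemma fnorm_polyF {P : Polynomial K} (hP : P ≠ 0) :
    fnorm (polyF P) = (Fintype.card K : ℝ) ^ (P.natDegree) := by
  have hq := one_lt_qR (K := K)
  have h1 : (toL (polyF P)).coeff (-(P.natDegree : ℤ)) ≠ 0 := by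
    rw [coeff_polyF, if_pos (by omega)]
    simpa using hP
  have h2 : toL (polyF P) ≠ 0 := by
    intro h; rw [h] at h1; simp at h1
  have h3 : (toL (polyF P)).order = -(P.natDegree : ℤ) := by
    apply le_antisymm (HahnSeries.order_le_of_coeff_ne_zero h1)
    by_contra hc
    apply h2
    apply HahnSeries.coeff_order_eq_zero.mp
    rw [coeff_polyF]
    split_ifs with h
    · apply Polynomial.coeff_eq_zero_of_natDegree_lt
      omega
    · rfl
  unfold fnorm
  rw [if_neg h2, h3, neg_neg, zpow_natCast]

lemma polyF_ne_zero {P : Polynomial K} (hP : P ≠ 0) : polyF P ≠ 0 := by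
  intro h
  have h1 := fnorm_polyF hP
  rw [h, fnorm_eq_zero.mpr rfl] at h1
  have hq := one_lt_qR (K := K)
  have : (0:ℝ) < (Fintype.card K : ℝ) ^ (P.natDegree) := by positivity
  linarith

lemma coeff_fracPart (x : FF K) (i : ℤ) :
    (toL (fracPart x)).coeff i = if 1 ≤ i then (toL x).coeff i else 0 := rfl

lemma fracPart_eq (x : FF K) : fracPart x = x - polyF (intPoly x) := by
  apply HahnSeries.ext
  funext i
  show (toL (fracPart x)).coeff i = (toL (x - polyF (intPoly x))).coeff i
  rw [coeff_fracPart, toL_sub, HahnSeries.coeff_sub, coeff_polyF]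
  split_ifs with h1 h2 h2
  · omega
  · simp
  · obtain ⟨k, rfl⟩ : ∃ k : ℕ, i = -(k : ℤ) := ⟨(-i).toNat, by omega⟩
    unfold intPoly
    rw [Polynomial.finsetSum_coeff]
    simp only [Polynomial.coeff_monomial, neg_neg, Int.toNat_natCast]
    rw [Finset.sum_ite_eq']
    split_ifs with hk
    · simp
    · simp only [Finset.mem_range, not_lt] at hk
      rw [HahnSeries.coeff_eq_zero_of_lt_order (by omega)]; simp
  · omega

lemma fnorm_fracPart_le_iff (x : FF K) (n : ℕ) :
    fnorm (fracPart x) ≤ (Fintype.card K : ℝ) ^ (-((n : ℤ) + 1)) ↔ ZZ n x := by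
  rw [fnorm_le_iff]
  constructor
  · intro h i hi
    have := h (i + 1) (by omega)
    rwa [coeff_fracPart, if_pos (by omega)] at this
  · intro h i hi
    rw [coeff_fracPart]
    split_ifs with h1
    · have := h (i - 1).toNat (by omega)
      rw [dig] at this
      rwa [show (((i - 1).toNat : ℕ) : ℤ) + 1 = i by omega] at this
    · rfl

lemma fracPart_fnorm_le (x : FF K) (y : Polynomial K) :
    fnorm (fracPart x) ≤ fnorm (x - polyF y) := by
  have hq := one_lt_qR (K := K)
  by_cases h : toL (x - polyF y) = 0
  · have hx : fracPart x = 0 := by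
      have hx : x = polyF y := sub_eq_zero.mp h
      apply HahnSeries.ext
      funext i
      show (toL (fracPart x)).coeff i = 0
      rw [coeff_fracPart, hx, coeff_polyF]
      split_ifs <;> first | rfl | omega
    rw [fnorm_eq_zero.mpr hx]; exact fnorm_nonneg _
  · have h2 : fnorm (x - polyF y) = (Fintype.card K : ℝ) ^ (-(toL (x - polyF y)).order) := by
      conv_lhs => unfold fnorm
      rw [if_neg h]
    rw [h2, fnorm_le_iff]
    intro i hi
    rw [coeff_fracPart]
    split_ifs with h1
    · have := HahnSeries.coeff_eq_zero_of_lt_order hi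
      rw [toL_sub, HahnSeries.coeff_sub, coeff_polyF, if_neg (by omega), sub_zero] at this
      exact this
    · rfl

lemma sdist_eq (x : FF K) : sdist x = fnorm (fracPart x) := by
  unfold sdist
  apply le_antisymm
  · rw [fracPart_eq]
    exact ciInf_le ⟨0, by rintro _ ⟨y, rfl⟩; exact fnorm_nonneg _⟩ (intPoly x)
  · exact le_ciInf (fun y => fracPart_fnorm_le x y)

lemma sdist_le_iff (x : FF K) (n : ℕ) :
    sdist x ≤ (Fintype.card K : ℝ) ^ (-((n : ℤ) + 1)) ↔ ZZ n x := by
  rw [sdist_eq, fnorm_fracPart_le_iff]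

/-- values of the norm are discrete -/
lemma fnorm_le_of_lt {x : FF K} {n : ℤ} (h : fnorm x < (Fintype.card K : ℝ) ^ n) :
    fnorm x ≤ (Fintype.card K : ℝ) ^ (n - 1) := by
  have hq := one_lt_qR (K := K)
  unfold fnorm at *
  split_ifs at * with h0
  · positivity
  · rw [zpow_lt_zpow_iff_right₀ hq] at h
    rw [zpow_le_zpow_iff_right₀ hq]; omega

/-- element with prescribed digits -/
def mkF (a : ℕ → K) : FF K :=
  (HahnSeries.ofSuppBddBelow (fun i : ℤ => if 1 ≤ i then a (i - 1).toNat else 0)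
    ⟨1, by
      intro i hi
      by_contra hc
      simp [hc] at hi⟩ : LaurentSeries K)

lemma dig_mkF (a : ℕ → K) (i : ℕ) : dig (mkF a) i = a i := by
  show (if (1:ℤ) ≤ (i:ℤ) + 1 then a ((i:ℤ) + 1 - 1).toNat else 0) = a i
  rw [if_pos (by omega)]; simp

lemma fnorm_mkF (a : ℕ → K) : fnorm (mkF a) < 1 := by
  have hq := one_lt_qR (K := K)
  have : fnorm (mkF a) ≤ (Fintype.card K : ℝ) ^ (-(1:ℤ)) := by
    rw [fnorm_le_iff]
    intro i hi
    show (if (1:ℤ) ≤ i then a (i - 1).toNat else 0) = 0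
    rw [if_neg (by omega)]
  refine this.trans_lt ?_
  rw [zpow_neg_one]
  exact inv_lt_one_of_one_lt₀ hq

lemma dist_def (x y : FF K) : dist x y = fnorm (x - y) := rfl

lemma coeff_of_fnorm_lt {x : FF K} (hx : fnorm x < 1) {i : ℤ} (hi : i ≤ 0) :
    (toL x).coeff i = 0 := by
  have h : fnorm x < (Fintype.card K : ℝ) ^ (0:ℤ) := by simpa using hx
  have h2 := fnorm_le_of_lt h
  rw [show (0:ℤ) - 1 = -1 by norm_num, fnorm_le_iff] at h2
  exact h2 i (by omega)

lemma dist_le_iff {x y : FF K} (hx : fnorm x < 1) (hy : fnorm y < 1) (n : ℕ) :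
    dist x y ≤ (Fintype.card K : ℝ) ^ (-((n : ℤ) + 1)) ↔ ∀ i < n, dig x i = dig y i := by
  rw [dist_def, fnorm_le_iff]
  constructor
  · intro h i hi
    have := h (i + 1) (by omega)
    rw [toL_sub, HahnSeries.coeff_sub] at this
    exact sub_eq_zero.mp this
  · intro h i hi
    rw [toL_sub, HahnSeries.coeff_sub]
    by_cases h1 : i ≤ 0
    · rw [coeff_of_fnorm_lt hx h1, coeff_of_fnorm_lt hy h1, sub_zero]
    · have := h (i - 1).toNat (by omega)
      rw [dig, dig, show (((i - 1).toNat : ℕ) : ℤ) + 1 = i by omega] at this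
      rw [this, sub_self]

/-- `Q` is a best approximation denominator of degree `d`, witnessed at level `n`. -/
def Wit (α : FF K) (d n : ℕ) (Q : Polynomial K) : Prop :=
  Q ≠ 0 ∧ Q.natDegree = d ∧ ZZ n (polyF Q * α) ∧
    ∀ x : Polynomial K, x ≠ 0 → x.natDegree < d → ¬ ZZ n (polyF x * α)

/-- degrees of the best approximation denominators -/
def SS (α : FF K) : Set ℕ := {d | ∃ n Q, Wit α d n Q}

/-- polynomial with prescribed coefficients -/
def pol (m : ℕ) (v : Fin m → K) : Polynomial K := ((Polynomial.degreeLTEquiv K m).symm v).1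

lemma pol_sub (m : ℕ) (v w : Fin m → K) : pol m (v - w) = pol m v - pol m w := by
  simp [pol]

lemma pol_inj {m : ℕ} {v w : Fin m → K} (h : pol m v = pol m w) : v = w :=
  (Polynomial.degreeLTEquiv K m).symm.injective (Subtype.ext h)

lemma pol_degree (m : ℕ) (v : Fin m → K) : (pol m v).degree < m :=
  Polynomial.mem_degreeLT.mp ((Polynomial.degreeLTEquiv K m).symm v).2

lemma pol_zero (m : ℕ) : pol m (0 : Fin m → K) = 0 := by simp [pol]

/-- prefix map -/
def pref (n : ℕ) (x : FF K) : Fin n → K := fun i => dig x i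

lemma pref_eq_zero {n : ℕ} {x : FF K} : pref n x = 0 ↔ ZZ n x := by
  constructor
  · intro h i hi
    exact congrFun h ⟨i, hi⟩
  · intro h
    funext i
    exact h i i.2

lemma exists_small (α : FF K) (n : ℕ) :
    ∃ Q : Polynomial K, Q ≠ 0 ∧ Q.natDegree ≤ n ∧ ZZ n (polyF Q * α) := by
  have hcard : Fintype.card (Fin n → K) < Fintype.card (Fin (n+1) → K) := by
    simp only [Fintype.card_fun, Fintype.card_fin]
    exact Nat.pow_lt_pow_right Fintype.one_lt_card (Nat.lt_succ_self n)
  obtain ⟨v, w, hvw, h⟩ := Fintype.exists_ne_map_eq_of_card_lt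
    (fun v : Fin (n+1) → K => pref n (polyF (pol (n+1) v) * α)) hcard
  have hne : pol (n+1) v - pol (n+1) w ≠ 0 := by
    intro h0
    exact hvw (pol_inj (sub_eq_zero.mp h0))
  refine ⟨pol (n+1) v - pol (n+1) w, hne, ?_, ?_⟩
  · rw [← pol_sub] at hne ⊢
    have := pol_degree (n+1) (v - w)
    have := (Polynomial.natDegree_lt_iff_degree_lt hne).mpr this
    omega
  · intro i hi
    have := congrFun h ⟨i, hi⟩
    rw [polyF_sub, sub_mul, dig_sub]
    exact sub_eq_zero.mpr this

lemma exists_wit (α : FF K) (n : ℕ) : ∃ d ≤ n, ∃ Q, Wit α d n Q := by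
  have hex : ∃ d, ∃ Q : Polynomial K, Q ≠ 0 ∧ Q.natDegree = d ∧ ZZ n (polyF Q * α) := by
    obtain ⟨Q, h1, h2, h3⟩ := exists_small α n
    exact ⟨_, Q, h1, rfl, h3⟩
  refine ⟨Nat.find hex, ?_, ?_⟩
  · obtain ⟨Q, h1, h2, h3⟩ := exists_small α n
    exact (Nat.find_min' hex ⟨Q, h1, rfl, h3⟩).trans h2
  · obtain ⟨Q, h1, h2, h3⟩ := Nat.find_spec hex
    refine ⟨Q, h1, h2, h3, ?_⟩
    intro x hx hd hz
    exact Nat.find_min hex hd ⟨x, hx, rfl, hz⟩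

lemma wit_unique {α : FF K} {d n n' : ℕ} {Q Q' : Polynomial K} (h : Wit α d n Q)
    (h' : Wit α d n' Q') : ZZ n (polyF Q' * α) := by
  rcases le_total n n' with hn | hn
  · exact ZZ_mono hn h'.2.2.1
  obtain ⟨h1, h2, h3, h4⟩ := h
  obtain ⟨h1', h2', h3', h4'⟩ := h'
  have hl : Q.leadingCoeff ≠ 0 := by simpa using h1
  have hl' : Q'.leadingCoeff ≠ 0 := by simpa using h1'
  set u := Q'.leadingCoeff / Q.leadingCoeff with hu
  have hu0 : u ≠ 0 := div_ne_zero hl' hl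
  have hdQ : (Polynomial.C u * Q).natDegree = d := by
    rw [Polynomial.natDegree_C_mul hu0, h2]
  have hC : ∀ k, ZZ k (polyF Q * α) → ZZ k (polyF (Polynomial.C u * Q) * α) := by
    intro k hk
    rw [polyF_mul, mul_assoc]
    exact ZZ_polyF_mul (a := 0) (by simp) (by simpa using hk)
  have hz : Q' - Polynomial.C u * Q = 0 := by
    by_contra hne
    refine h4' _ hne ?_ ?_
    · have hlt : (Q' - Polynomial.C u * Q).degree < Q'.degree := by
        apply Polynomial.degree_sub_lt_left
        · rw [Polynomial.degree_eq_natDegree h1', h2',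
            Polynomial.degree_eq_natDegree (mul_ne_zero (by simpa using hu0) h1), hdQ]
        · exact h1'
        · rw [Polynomial.leadingCoeff_mul, Polynomial.leadingCoeff_C, hu]
          field_simp
      have := Polynomial.natDegree_lt_natDegree hne hlt
      omega
    · rw [polyF_sub, sub_mul]
      exact ZZ_sub h3' (hC _ (ZZ_mono hn h3))
  rw [sub_eq_zero.mp hz]
  exact hC _ h3

lemma not_ZZ_of_mem {α : FF K} {d : ℕ} (hd : d ∈ SS α) {x : Polynomial K} (hx : x ≠ 0)
    (hxd : x.natDegree < d) : ¬ ZZ d (polyF x * α) := by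
  obtain ⟨n, Q, hQ, hQd, hQn, hmin⟩ := hd
  intro hz
  have hq := one_lt_qR (K := K)
  have hnz := hmin x hx hxd
  have hdn : d < n := by
    by_contra hc
    exact hnz (ZZ_mono (by omega) hz)
  set e := fracPart (polyF x * α) with he
  set E := fracPart (polyF Q * α) with hE
  have he1 : fnorm e ≤ (Fintype.card K : ℝ) ^ (-((d : ℤ) + 1)) := (fnorm_fracPart_le_iff _ _).mpr hz
  have hE1 : fnorm E ≤ (Fintype.card K : ℝ) ^ (-((n : ℤ) + 1)) :=
    (fnorm_fracPart_le_iff _ _).mpr hQn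
  have key : polyF (Q * intPoly (polyF x * α) - x * intPoly (polyF Q * α)) =
      polyF x * E + -(polyF Q * e) := by
    rw [polyF_sub, polyF_mul, polyF_mul, he, hE, fracPart_eq, fracPart_eq]; ring
  have hz0 : Q * intPoly (polyF x * α) - x * intPoly (polyF Q * α) = 0 := by
    by_contra hne
    have h1 := fnorm_polyF hne
    have h2 : (1:ℝ) ≤ fnorm (polyF (Q * intPoly (polyF x * α) - x * intPoly (polyF Q * α))) := by
      rw [h1]; exact one_le_pow₀ hq.le
    rw [key] at h2
    have h3 := h2.trans (fnorm_add_le _ _)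
    rw [fnorm_neg, fnorm_mul, fnorm_mul, fnorm_polyF hQ, fnorm_polyF hx] at h3
    rcases le_max_iff.mp h3 with h | h
    · have : (Fintype.card K : ℝ) ^ x.natDegree * fnorm E ≤
          (Fintype.card K : ℝ) ^ x.natDegree * (Fintype.card K : ℝ) ^ (-((n : ℤ) + 1)) := by
        gcongr
      rw [← zpow_natCast, ← zpow_add₀ (by positivity)] at this
      have h5 := (zpow_natCast (Fintype.card K : ℝ) x.natDegree ▸ h).trans this
      have h6 : (Fintype.card K : ℝ) ^ ((x.natDegree : ℤ) + -((n : ℤ) + 1)) < 1 :=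
        zpow_lt_one_of_neg₀ hq (by omega)
      linarith
    · have : (Fintype.card K : ℝ) ^ Q.natDegree * fnorm e ≤
          (Fintype.card K : ℝ) ^ Q.natDegree * (Fintype.card K : ℝ) ^ (-((d : ℤ) + 1)) := by
        gcongr
      rw [← zpow_natCast, ← zpow_add₀ (by positivity)] at this
      have h5 := (zpow_natCast (Fintype.card K : ℝ) Q.natDegree ▸ h).trans this
      have h6 : (Fintype.card K : ℝ) ^ ((Q.natDegree : ℤ) + -((d : ℤ) + 1)) < 1 :=
        zpow_lt_one_of_neg₀ hq (by omega)
      linarith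
  rw [hz0] at key
  have h0 : polyF (0 : Polynomial K) = 0 := by simp [polyF]; rfl
  rw [h0] at key
  have hEe : polyF x * E = polyF Q * e := by
    have := key.symm
    linear_combination this
  have hn2 : (Fintype.card K : ℝ) ^ x.natDegree * fnorm E =
      (Fintype.card K : ℝ) ^ Q.natDegree * fnorm e := by
    rw [← fnorm_polyF hx, ← fnorm_polyF hQ, ← fnorm_mul, ← fnorm_mul, hEe]
  apply hnz
  rw [← fnorm_fracPart_le_iff]
  refine le_trans ?_ hE1
  have hpow : (Fintype.card K : ℝ) ^ x.natDegree ≤ (Fintype.card K : ℝ) ^ Q.natDegree :=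
    pow_le_pow_right₀ hq.le (by omega)
  have hpos : (0:ℝ) < (Fintype.card K : ℝ) ^ Q.natDegree := by positivity
  have h7 : (Fintype.card K : ℝ) ^ Q.natDegree * fnorm e ≤
      (Fintype.card K : ℝ) ^ Q.natDegree * fnorm E := by
    rw [← hn2]
    exact mul_le_mul_of_nonneg_right hpow (fnorm_nonneg _)
  exact le_of_mul_le_mul_left h7 hpos

/-- every prefix of length `d ∈ S` is the prefix of some `α x` with `deg x = d`. -/
lemma exists_prefix {α : FF K} {d : ℕ} (hd : d ∈ SS α) (w : Fin d → K) :
    ∃ x : Polynomial K, x ≠ 0 ∧ x.natDegree = d ∧ pref d (polyF x * α) = w := by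
  have hinj : Function.Injective (fun v : Fin d → K => pref d (polyF (pol d v) * α)) := by
    intro v v' h
    by_contra hne
    have hne' : pol d (v - v') ≠ 0 := by
      rw [pol_sub]
      intro h0
      exact hne (pol_inj (sub_eq_zero.mp h0))
    refine not_ZZ_of_mem hd hne'
      ((Polynomial.natDegree_lt_iff_degree_lt hne').mpr (pol_degree d _)) ?_
    intro i hi
    rw [pol_sub, polyF_sub, sub_mul, dig_sub]
    exact sub_eq_zero.mpr (congrFun h ⟨i, hi⟩)
  have hsurj := Finite.injective_iff_surjective.mp hinj
  obtain ⟨v, hv⟩ := hsurj (w - pref d (polyF (Polynomial.X ^ d) * α))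
  have hdeg : (Polynomial.X ^ d + pol d v).natDegree = d := by
    rw [Polynomial.natDegree_add_eq_left_of_degree_lt (by simpa using pol_degree d v),
      Polynomial.natDegree_X_pow]
  have hmonic : (Polynomial.X ^ d + pol d v).Monic :=
    Polynomial.monic_X_pow_add (pol_degree d v)
  refine ⟨Polynomial.X ^ d + pol d v, hmonic.ne_zero, hdeg, ?_⟩
  funext i
  have h1 := congrFun hv i
  simp only [pref, Pi.sub_apply] at h1 ⊢
  rw [polyF_add, add_mul, dig_add, h1]; ring

/-- good scales -/
def GoodL (α : FF K) (c : ℝ) (l : ℕ) : Prop :=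
  ∃ Q : Polynomial K, Q ≠ 0 ∧ fnorm (polyF Q) ≤ 2 ^ l ∧
    fnorm (fracPart (polyF Q * α)) ≤ c / 2 ^ l

/-- counting function of `S` -/
def cS (α : FF K) (n : ℕ) : ℕ := ((Finset.range n).filter (fun d => d ∈ SS α)).card

/-- `S` has density zero -/
def DZ (α : FF K) : Prop := ∀ η : ℝ, 0 < η → ∀ᶠ N : ℕ in atTop, (cS α N : ℝ) ≤ η * N

lemma good_add_bad (α : FF K) (c : ℝ) (N : ℕ) :
    ((Finset.Icc 1 N).filter (fun l => GoodL α c l)).card +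
      ((Finset.Icc 1 N).filter (fun l => ¬ GoodL α c l)).card = N := by
  rw [Finset.card_filter_add_card_filter_not]; simp

lemma DZ_of_soa {α : FF K} (h : SingularOnAverage α) : DZ α := by
  intro η hη
  have hq := one_lt_qR (K := K)
  have hq2 := two_le_q (K := K)
  set q := Fintype.card K with hqdef
  set b := Nat.clog 2 q with hb
  have hqb : q ≤ 2 ^ b := Nat.le_pow_clog (by norm_num) q
  have hb1 : 0 < b := Nat.clog_pos (by norm_num) hq2
  set c : ℝ := (q : ℝ) ^ (-2 : ℤ) with hc
  have hcpos : 0 < c := by positivity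
  have hT := h c hcpos
  change Tendsto (fun N : ℕ => (((Finset.Icc 1 N).filter (fun l => GoodL α c l)).card : ℝ) / N)
    atTop (nhds 1) at hT
  set η' : ℝ := η / (2 * b) with hη'
  have hbR : (0:ℝ) < b := by exact_mod_cast hb1
  have hη'pos : 0 < η' := by positivity
  have hev := hT.eventually (lt_mem_nhds (show 1 - η' < 1 by linarith))
  have hmul : Tendsto (fun N : ℕ => b * N) atTop atTop :=
    tendsto_id.const_mul_atTop' hb1
  have hev2 := hmul.eventually hev
  -- injection
  have hinj : ∀ N : ℕ, cS α N ≤ 2 + ((Finset.Icc 1 (b * N)).filter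
      (fun l => ¬ GoodL α c l)).card := by
    intro N
    have hsub : (Finset.range N).filter (fun d => d ∈ SS α) ⊆
        Finset.range 2 ∪ (Finset.Ico 2 N).filter (fun d => d ∈ SS α) := by
      intro d hd
      simp only [Finset.mem_filter, Finset.mem_range, Finset.mem_union, Finset.mem_Ico] at hd ⊢
      by_cases h2 : d < 2
      · exact Or.inl h2
      · exact Or.inr ⟨⟨by omega, hd.1⟩, hd.2⟩
    refine (Finset.card_le_card hsub).trans ((Finset.card_union_le _ _).trans ?_)
    rw [Finset.card_range]
    apply Nat.add_le_add_left
    have hl1 : ∀ d, 2 ≤ d → q ^ (d - 1) ≤ 2 ^ (Nat.clog 2 (q ^ (d - 1))) :=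
      fun d _ => Nat.le_pow_clog (by norm_num) _
    have hl2 : ∀ d, 2 ≤ d → 2 ^ (Nat.clog 2 (q ^ (d - 1))) < q ^ d := by
      intro d hd
      have h1 : 1 < q ^ (d - 1) := Nat.one_lt_pow (by omega) hq2
      have h2 := Nat.pow_pred_clog_lt_self (b := 2) (by norm_num) h1
      have h3 : 0 < Nat.clog 2 (q ^ (d - 1)) := Nat.clog_pos (by norm_num) h1
      obtain ⟨k, hk⟩ : ∃ k, Nat.clog 2 (q ^ (d - 1)) = k + 1 := ⟨_, (Nat.succ_pred_eq_of_pos h3).symm⟩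
      rw [hk] at h2 ⊢
      simp only [Nat.pred_succ] at h2
      obtain ⟨e, rfl⟩ : ∃ e, d = e + 1 := ⟨d - 1, by omega⟩
      simp only [Nat.add_sub_cancel] at h2
      rw [pow_succ, pow_succ]
      calc 2 ^ k * 2 < q ^ e * 2 := by omega
        _ ≤ q ^ e * q := Nat.mul_le_mul_left _ hq2
    apply Finset.card_le_card_of_injOn (fun d => Nat.clog 2 (q ^ (d - 1)))
    · intro d hd
      simp only [Finset.coe_filter, Finset.mem_Ico, Set.mem_ofPred_eq, Finset.mem_Icc] at hd ⊢
      obtain ⟨⟨hd2, hdN⟩, hdS⟩ := hd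
      have h1 : 1 < q ^ (d - 1) := Nat.one_lt_pow (by omega) hq2
      refine ⟨⟨Nat.clog_pos (by norm_num) h1, ?_⟩, ?_⟩
      · apply Nat.clog_le_of_le_pow
        calc q ^ (d - 1) ≤ (2 ^ b) ^ (d - 1) := Nat.pow_le_pow_left hqb _
          _ = 2 ^ (b * (d - 1)) := by rw [pow_mul]
          _ ≤ 2 ^ (b * N) := Nat.pow_le_pow_right (by norm_num) (Nat.mul_le_mul_left _ (by omega))
      · rintro ⟨Q, hQ, hQ1, hQ2⟩
        have hdeg : Q.natDegree < d := by
          rw [fnorm_polyF hQ] at hQ1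
          have h3 : (q : ℝ) ^ Q.natDegree < (q:ℝ) ^ d := by
            refine hQ1.trans_lt ?_
            exact_mod_cast hl2 d hd2
          exact (pow_lt_pow_iff_right₀ hq).mp h3
        apply not_ZZ_of_mem hdS hQ hdeg
        rw [← fnorm_fracPart_le_iff]
        refine hQ2.trans ?_
        have h4 : (q : ℝ) ^ ((d:ℤ) - 1) ≤ 2 ^ (Nat.clog 2 (q ^ (d - 1))) := by
          have := hl1 d hd2
          have h5 : ((q ^ (d-1) : ℕ) : ℝ) ≤ ((2 ^ (Nat.clog 2 (q ^ (d - 1))) : ℕ) : ℝ) := by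
            exact_mod_cast this
          push_cast at h5
          rw [show ((d:ℤ) - 1) = ((d - 1 : ℕ) : ℤ) by omega, zpow_natCast]
          exact h5
        calc c / 2 ^ (Nat.clog 2 (q ^ (d - 1))) ≤ c / (q : ℝ) ^ ((d:ℤ) - 1) := by
              apply div_le_div_of_nonneg_left hcpos.le (by positivity) h4
          _ = (q:ℝ) ^ (-((d:ℤ) + 1)) := by
              rw [hc, ← zpow_sub₀ (by positivity)]; congr 1; ring
    · have hmono : ∀ d e, 2 ≤ d → d < e →
          Nat.clog 2 (q ^ (d - 1)) < Nat.clog 2 (q ^ (e - 1)) := by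
        intro d e hd hde
        have h1 := hl2 d hd
        have h2 := hl1 e (by omega)
        have h3 : q ^ d ≤ q ^ (e - 1) := Nat.pow_le_pow_right (by omega) (by omega)
        exact (Nat.pow_lt_pow_iff_right (by norm_num : 1 < 2)).mp (h1.trans_le (h3.trans h2))
      intro d hd e he hde
      simp only [Finset.coe_filter, Finset.mem_Ico, Set.mem_ofPred_eq] at hd he hde
      rcases lt_trichotomy d e with h | h | h
      · have := hmono d e hd.1.1 h; omega
      · exact h
      · have := hmono e d he.1.1 h; omega
  have hev3 : ∀ᶠ N : ℕ in atTop, (2:ℝ) ≤ (η / 2) * N := by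
    have : Tendsto (fun N : ℕ => (η / 2) * (N:ℝ)) atTop atTop :=
      tendsto_natCast_atTop_atTop.const_mul_atTop (by positivity)
    exact this.eventually_ge_atTop 2
  filter_upwards [hev2, hev3, eventually_ge_atTop 1] with N h1 h2 h3
  have h4 := hinj N
  have h5 := good_add_bad α c (b * N)
  have hpos : (0:ℝ) < ((b * N : ℕ) : ℝ) := by
    have : 0 < b * N := Nat.mul_pos hb1 h3
    exact_mod_cast this
  rw [lt_div_iff₀ hpos] at h1
  have h4' : (cS α N : ℝ) ≤ 2 + (((Finset.Icc 1 (b * N)).filter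
      (fun l => ¬ GoodL α c l)).card : ℝ) := by exact_mod_cast h4
  have h5' : (((Finset.Icc 1 (b * N)).filter (fun l => GoodL α c l)).card : ℝ) +
      (((Finset.Icc 1 (b * N)).filter (fun l => ¬ GoodL α c l)).card : ℝ) = ((b * N : ℕ) : ℝ) := by
    exact_mod_cast h5
  have h6 : η' * ((b * N : ℕ) : ℝ) = (η / 2) * N := by
    rw [hη']; push_cast; field_simp
  nlinarith

lemma soa_of_DZ {α : FF K} (h : DZ α) : SingularOnAverage α := by
  intro c hc
  have hq := one_lt_qR (K := K)
  have hq2 := two_le_q (K := K)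
  set q := Fintype.card K with hqdef
  set b := Nat.clog 2 q with hb
  have hqb : q ≤ 2 ^ b := Nat.le_pow_clog (by norm_num) q
  obtain ⟨M, hM⟩ : ∃ M : ℕ, ((q:ℝ)⁻¹) ^ M < c :=
    exists_pow_lt_of_lt_one hc (inv_lt_one_of_one_lt₀ hq)
  change Tendsto (fun N : ℕ => (((Finset.Icc 1 N).filter (fun l => GoodL α c l)).card : ℝ) / N)
    atTop (nhds 1)
  have hbad : ∀ N, ((Finset.Icc 1 N).filter (fun l => ¬ GoodL α c l)).card ≤
      cS α (N + M + 1) * (b * M) := by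
    intro N
    have hsub : (Finset.Icc 1 N).filter (fun l => ¬ GoodL α c l) ⊆
        ((Finset.range (N + M + 1)).filter (fun d => d ∈ SS α)).biUnion
          (fun d => Finset.Ico (Nat.clog 2 (q ^ (d - M))) (Nat.clog 2 (q ^ (d - M)) + b * M)) := by
      intro l hl
      simp only [Finset.mem_filter, Finset.mem_Icc] at hl
      obtain ⟨⟨hl1, hlN⟩, hbadl⟩ := hl
      set n := Nat.log q (2 ^ l) with hn
      have hn1 : q ^ n ≤ 2 ^ l := Nat.pow_log_le_self q (by positivity)
      have hn2 : 2 ^ l < q ^ (n + 1) := Nat.lt_pow_succ_log_self hq2 _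
      have hnl : n ≤ l := by
        have : 2 ^ n ≤ 2 ^ l := (Nat.pow_le_pow_left hq2 n).trans hn1
        exact (Nat.pow_le_pow_iff_right (by norm_num : 1 < 2)).mp this
      obtain ⟨d, hd, Q, hW⟩ := exists_wit α (n + M)
      have hdn : n < d := by
        by_contra hc'
        apply hbadl
        refine ⟨Q, hW.1, ?_, ?_⟩
        · rw [fnorm_polyF hW.1, hW.2.1]
          calc (q:ℝ) ^ d ≤ (q:ℝ) ^ n := pow_le_pow_right₀ hq.le (by omega)
            _ ≤ 2 ^ l := by exact_mod_cast hn1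
        · refine ((fnorm_fracPart_le_iff _ _).mpr hW.2.2.1).trans ?_
          have e1 : (q:ℝ) ^ (-(((n + M : ℕ) : ℤ) + 1)) = ((q:ℝ)⁻¹) ^ M / (q:ℝ) ^ (n+1) := by
            rw [inv_pow, ← zpow_natCast, ← zpow_natCast, ← zpow_neg, ← zpow_sub₀ (by positivity)]
            congr 1; push_cast; ring
          rw [← hqdef, e1]
          apply div_le_div₀ hc.le hM.le (by positivity)
          exact_mod_cast hn2.le
      simp only [Finset.mem_biUnion, Finset.mem_filter, Finset.mem_range, Finset.mem_Ico]
      refine ⟨d, ⟨by omega, ⟨_, Q, hW⟩⟩, ?_, ?_⟩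
      · apply Nat.clog_le_of_le_pow
        exact (Nat.pow_le_pow_right (by omega) (by omega)).trans hn1
      · have h1 : q ^ (d - M) ≤ 2 ^ (Nat.clog 2 (q ^ (d - M))) := Nat.le_pow_clog (by norm_num) _
        have h2 : 2 ^ l < 2 ^ (Nat.clog 2 (q ^ (d - M)) + b * M) := by
          calc 2 ^ l < q ^ (n + 1) := hn2
            _ ≤ q ^ ((d - M) + M) := Nat.pow_le_pow_right (by omega) (by omega)
            _ = q ^ (d - M) * q ^ M := pow_add _ _ _
            _ ≤ 2 ^ (Nat.clog 2 (q ^ (d - M))) * (2 ^ b) ^ M :=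
              Nat.mul_le_mul h1 (Nat.pow_le_pow_left hqb M)
            _ = _ := by rw [pow_add, pow_mul]
        exact (Nat.pow_lt_pow_iff_right (by norm_num : 1 < 2)).mp h2
    refine (Finset.card_le_card hsub).trans ?_
    refine (Finset.card_biUnion_le).trans ?_
    simp [cS]
  rw [Metric.tendsto_nhds]
  intro ε hε
  set η : ℝ := ε / (2 * (b * M + 1)) / 2 with hη
  have hηpos : 0 < η := by positivity
  have hev := h η hηpos
  have hshift : Tendsto (fun N : ℕ => N + (M + 1)) atTop atTop := tendsto_add_atTop_nat _
  filter_upwards [hshift.eventually hev, eventually_ge_atTop (M + 1)] with N h1 h2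
  have h5 := good_add_bad α c N
  have h6 := hbad N
  set G := ((Finset.Icc 1 N).filter (fun l => GoodL α c l)).card
  set B := ((Finset.Icc 1 N).filter (fun l => ¬ GoodL α c l)).card
  have hN : (0:ℝ) < N := by
    have : 0 < N := by omega
    exact_mod_cast this
  have hGB : (G:ℝ) / N - 1 = - (B / N) := by
    have : (G:ℝ) + B = N := by exact_mod_cast h5
    field_simp; linarith
  rw [Real.dist_eq, hGB, abs_neg, abs_of_nonneg (by positivity), div_lt_iff₀ hN]
  have h6' : (B:ℝ) ≤ cS α (N + M + 1) * (b * M) := by exact_mod_cast h6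
  rw [← add_assoc] at h1
  have h7 : ((N + M + 1 : ℕ) : ℝ) ≤ 2 * N := by
    have : N + M + 1 ≤ 2 * N := by omega
    exact_mod_cast this
  have h8 : (cS α (N + M + 1) : ℝ) ≤ η * (2 * N) := h1.trans (by gcongr)
  calc (B:ℝ) ≤ cS α (N + M + 1) * (b * M) := h6'
    _ ≤ (η * (2 * N)) * (b * M) := by gcongr
    _ ≤ (η * (2 * N)) * (b * M + 1) := by gcongr; linarith
    _ = ε / 2 * N := by rw [hη]; field_simp
    _ < ε * N := by nlinarith

/-- a chosen best approximation denominator of degree `d` -/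
def Qd (α : FF K) (d : ℕ) : Polynomial K :=
  if h : d ∈ SS α then h.choose_spec.choose else 0

lemma Qd_wit {α : FF K} {d : ℕ} (h : d ∈ SS α) : ∃ n, Wit α d n (Qd α d) := by
  refine ⟨h.choose, ?_⟩
  rw [Qd, dif_pos h]
  exact h.choose_spec.choose_spec

/-- digits forced at places in `S`, free elsewhere -/
def aseq (α : FF K) (e : ℕ → K) : ℕ → K
  | n => if n ∈ SS α then
      (1 - ∑ j : Fin n, (Qd α n).coeff j * aseq α e j) / (Qd α n).coeff n else e n
termination_by n => n
decreasing_by exact j.2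

/-- the Cantor-like set -/
def EE (α : FF K) : Set (FF K) :=
  {θ | fnorm θ < 1 ∧ ∀ d ∈ SS α, dig (polyF (Qd α d) * θ) 0 ≠ 0}

lemma aseq_mem (α : FF K) (e : ℕ → K) : mkF (aseq α e) ∈ EE α := by
  refine ⟨fnorm_mkF _, ?_⟩
  intro d hd
  obtain ⟨n, h1, h2, h3, h4⟩ := Qd_wit hd
  have hc : (Qd α d).coeff d ≠ 0 := by
    have : (Qd α d).leadingCoeff ≠ 0 := by simpa using h1
    rwa [Polynomial.leadingCoeff, h2] at this
  rw [dig_polyF_mul, h2, Finset.sum_range_succ, Finset.sum_range]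
  simp only [zero_add, dig_mkF]
  have : aseq α e d = (1 - ∑ j : Fin d, (Qd α d).coeff j * aseq α e j) / (Qd α d).coeff d := by
    conv_lhs => rw [aseq]
    rw [if_pos hd]
  rw [this, mul_div_cancel₀ _ hc]
  simp

lemma aseq_free (α : FF K) (e : ℕ → K) {n : ℕ} (hn : n ∉ SS α) : aseq α e n = e n := by
  rw [aseq, if_neg hn]

lemma EE_sub (α : FF K) : EE α ⊆ sBad α ((Fintype.card K : ℝ) ^ (-2 : ℤ)) := by
  rintro θ ⟨h1, h2⟩
  have hq := one_lt_qR (K := K)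
  refine ⟨h1, ?_⟩
  unfold sBadLiminf
  refine Filter.le_liminf_of_le (by isBoundedDefault) ?_
  have hev : ∀ᶠ x : Polynomial K in comap (fun x : Polynomial K => fnorm (polyF x)) atTop,
      (1:ℝ) ≤ fnorm (polyF x) := (eventually_ge_atTop (1:ℝ)).comap _
  filter_upwards [hev] with x hx
  apply ENNReal.ofReal_le_ofReal
  have hx0 : x ≠ 0 := by
    rintro rfl
    have h0 : polyF (0 : Polynomial K) = 0 := by simp [polyF]; rfl
    rw [h0, fnorm_eq_zero.mpr rfl] at hx
    linarith
  by_contra hcon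
  push Not at hcon
  rw [fnorm_polyF hx0] at hcon
  set m := x.natDegree with hm
  have hlt : sdist (α * polyF x - θ) < (Fintype.card K : ℝ) ^ (-2 - (m:ℤ)) := by
    rw [zpow_sub₀ (by positivity), zpow_natCast, lt_div_iff₀ (by positivity), mul_comm]
    exact hcon
  rw [sdist_eq] at hlt
  have hle := fnorm_le_of_lt hlt
  rw [show (-2 - (m:ℤ) - 1) = -(((m + 2 : ℕ) : ℤ) + 1) by push_cast; ring,
    fnorm_fracPart_le_iff] at hle
  obtain ⟨d, hd, Q, hW⟩ := exists_wit α (m + 1)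
  have hdS : d ∈ SS α := ⟨_, Q, hW⟩
  obtain ⟨n', hW'⟩ := Qd_wit hdS
  have hz := wit_unique hW hW'
  apply h2 d hdS
  have e1 : polyF (Qd α d) * θ = polyF x * (polyF (Qd α d) * α) -
      polyF (Qd α d) * (α * polyF x - θ) := by ring
  rw [e1]
  have z1 : ZZ 1 (polyF x * (polyF (Qd α d) * α)) := ZZ_polyF_mul (a := m) hm.ge hz
  have z2 : ZZ 1 (polyF (Qd α d) * (α * polyF x - θ)) :=
    ZZ_polyF_mul (a := m + 1) (by rw [hW'.2.1]; exact hd) hle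
  exact ZZ_sub z1 z2 0 (by norm_num)

lemma compl_infinite {α : FF K} (h : DZ α) : (Set.ofPred (fun n => n ∉ SS α)).Infinite := by
  apply Set.infinite_of_not_bddAbove
  rintro ⟨B, hB⟩
  have hev := h (1/2) (by norm_num)
  obtain ⟨N, h1, h2⟩ := (hev.and (eventually_ge_atTop (2 * B + 3))).exists
  have h3 : N - (B + 1) ≤ cS α N := by
    have : Finset.Ico (B + 1) N ⊆ (Finset.range N).filter (fun d => d ∈ SS α) := by
      intro d hd
      simp only [Finset.mem_Ico, Finset.mem_filter, Finset.mem_range] at hd ⊢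
      refine ⟨hd.2, ?_⟩
      by_contra hc
      have : d ≤ B := hB hc
      omega
    have := Finset.card_le_card this
    rwa [Nat.card_Ico] at this
  have h4 : N + 1 ≤ 2 * cS α N := by omega
  have h5 : (N:ℝ) + 1 ≤ 2 * cS α N := by exact_mod_cast h4
  linarith

lemma count_compl (α : FF K) (n : ℕ) : Nat.count (fun n => n ∉ SS α) n + cS α n = n := by
  rw [Nat.count_eq_card_filter_range, cS, add_comm, Finset.card_filter_add_card_filter_not]
  simp

/-- read off the free digits -/
def ff (α θ : FF K) : ℝ :=
  Real.ofDigits (fun i => Fintype.equivFin K (dig θ (Nat.nth (fun n => n ∉ SS α) i)))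

lemma Icc_sub_image {α : FF K} (h : DZ α) : Set.Icc (0:ℝ) 1 ⊆ ff α '' EE α := by
  intro y hy
  obtain ⟨b, -, hb⟩ := Real.ofDigits_SurjOn (b := Fintype.card K) Fintype.one_lt_card hy
  refine ⟨_, aseq_mem α
    (fun n => (Fintype.equivFin K).symm (b (Nat.count (fun n => n ∉ SS α) n))), ?_⟩
  rw [← hb, ff]
  congr 1
  funext i
  have hinf := compl_infinite h
  have hmem : Nat.nth (fun n => n ∉ SS α) i ∉ SS α := Nat.nth_mem_of_infinite hinf i
  rw [dig_mkF, aseq_free _ _ hmem, Nat.count_nth (fun hf => absurd hf hinf)]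
  simp

lemma fnorm_cases {x : FF K} (hx : x ≠ 0) (h1 : fnorm x < 1) :
    ∃ n : ℕ, fnorm x = (Fintype.card K : ℝ) ^ (-((n : ℤ) + 1)) := by
  have hq := one_lt_qR (K := K)
  have h2 : fnorm x = (Fintype.card K : ℝ) ^ (-(toL x).order) := by
    unfold fnorm
    rw [if_neg (show toL x ≠ 0 from hx)]
  have h3 : 0 < (toL x).order := by
    by_contra hc
    rw [h2] at h1
    have : (1:ℝ) ≤ (Fintype.card K : ℝ) ^ (-(toL x).order) := one_le_zpow₀ hq.le (by omega)
    linarith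
  refine ⟨((toL x).order - 1).toNat, ?_⟩
  rw [h2]; congr 1; omega

lemma ff_holder {α : FF K} (h : DZ α) (r : ℝ≥0) (hr1 : r < 1) :
    ∃ C : ℝ≥0, HolderOnWith C r (ff α) (EE α) := by
  have hq := one_lt_qR (K := K)
  have hr1' : (r:ℝ) < 1 := by exact_mod_cast hr1
  obtain ⟨N0, hN0⟩ := eventually_atTop.mp (h (1 - r) (by linarith))
  have hb : ∀ n : ℕ, (cS α n : ℝ) ≤ (1 - r) * n + N0 := by
    intro n
    by_cases hn : N0 ≤ n
    · have := hN0 n hn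
      have h0 : (0:ℝ) ≤ N0 := by positivity
      linarith
    · have h1 := count_compl α n
      have h2 : cS α n ≤ N0 := by omega
      have h3 : (cS α n : ℝ) ≤ N0 := by exact_mod_cast h2
      have h4 : 0 ≤ (1 - (r:ℝ)) * n := mul_nonneg (by linarith) (by positivity)
      linarith
  refine ⟨(Fintype.card K : ℝ≥0) ^ (N0 + 1), ?_⟩
  intro x hx y hy
  by_cases hxy : x = y
  · simp [hxy]
  have hlt : fnorm (x - y) < 1 := by
    have := fnorm_add_le x (-y)
    rw [← sub_eq_add_neg, fnorm_neg] at this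
    exact this.trans_lt (max_lt hx.1 hy.1)
  obtain ⟨n, hn⟩ := fnorm_cases (sub_ne_zero.mpr hxy) hlt
  have hdist : dist x y = (Fintype.card K : ℝ) ^ (-((n : ℤ) + 1)) := hn
  have hdig := (dist_le_iff hx.1 hy.1 n).mp hdist.le
  have hinf := compl_infinite h
  have key : dist (ff α x) (ff α y) ≤
      ((Fintype.card K : ℝ) ^ (Nat.count (fun n => n ∉ SS α) n))⁻¹ := by
    rw [Real.dist_eq]
    apply Real.abs_ofDigits_sub_ofDigits_le
    intro i hi
    have := (Nat.lt_nth_iff_count_lt hinf).mp hi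
    rw [hdig _ this]
  have key2 : dist (ff α x) (ff α y) ≤ (Fintype.card K : ℝ) ^ (N0 + 1) * dist x y ^ (r:ℝ) := by
    refine key.trans ?_
    rw [hdist, ← Real.rpow_natCast, ← Real.rpow_natCast, ← Real.rpow_intCast, ← Real.rpow_neg (by positivity),
      ← Real.rpow_mul (by positivity), ← Real.rpow_add (by positivity)]
    apply Real.rpow_le_rpow_of_exponent_le hq.le
    have h1 : (Nat.count (fun n => n ∉ SS α) n : ℝ) + cS α n = n := by
      exact_mod_cast count_compl α n
    have h2 := hb n
    push_cast
    nlinarith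
  rw [edist_dist, edist_dist, ENNReal.ofReal_rpow_of_nonneg dist_nonneg (by positivity)]
  have e : ((((Fintype.card K : ℝ≥0) ^ (N0 + 1) : ℝ≥0)) : ℝ≥0∞) =
      ENNReal.ofReal ((Fintype.card K : ℝ) ^ (N0 + 1)) := by
    rw [ENNReal.ofReal_pow (by positivity), ENNReal.ofReal_natCast]; simp
  rw [e, ← ENNReal.ofReal_mul (by positivity)]
  exact ENNReal.ofReal_le_ofReal key2

lemma one_le_dimH {α : FF K} (h : DZ α) :
    1 ≤ dimH (sBad α ((Fintype.card K : ℝ) ^ (-2 : ℤ))) := by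
  refine le_trans ?_ (dimH_mono (EE_sub α))
  apply le_of_forall_lt
  intro c hc
  obtain ⟨r, hr1, hr2⟩ := ENNReal.lt_iff_exists_nnreal_btwn.mp hc
  have hr2' : r < 1 := by exact_mod_cast hr2
  have hr0 : 0 < r := by
    have := (zero_le (a := c)).trans_lt hr1
    exact_mod_cast this
  obtain ⟨C, hC⟩ := ff_holder h r hr2'
  have h1 := hC.dimH_image_le hr0
  have h2 : (1:ℝ≥0∞) ≤ dimH (ff α '' EE α) := by
    have h3 : dimH (Set.Icc (0:ℝ) 1) = 1 := by
      have := Real.dimH_of_nonempty_interior (E := ℝ) (s := Set.Icc (0:ℝ) 1) (by simp)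
      simpa using this
    rw [← h3]
    exact dimH_mono (Icc_sub_image h)
  have h4 := h2.trans h1
  rw [ENNReal.le_div_iff_mul_le (Or.inl (by exact_mod_cast hr0.ne')) (Or.inl (by simp)),
    one_mul] at h4
  exact hr1.trans_le h4

/-- prefixes of length `n` occurring in `B` -/
def Wd (B : Set (FF K)) (n : ℕ) : Finset (Fin n → K) :=
  Finset.univ.filter (fun w => ∃ θ ∈ B, pref n θ = w)

lemma mem_Wd {B : Set (FF K)} {n : ℕ} {w : Fin n → K} :
    w ∈ Wd B n ↔ ∃ θ ∈ B, pref n θ = w := by simp [Wd]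

lemma dimH_le_cover {B : Set (FF K)} (hB : ∀ θ ∈ B, fnorm θ < 1) (s : ℝ≥0) (C : ℝ) (hC : 0 ≤ C)
    (h : ∃ᶠ n : ℕ in atTop, ((Wd B n).card : ℝ) ≤ C * (Fintype.card K : ℝ) ^ ((s:ℝ) * n)) :
    dimH B ≤ s := by
  have hq := one_lt_qR (K := K)
  have hqinv : (Fintype.card K : ℝ)⁻¹ < 1 := inv_lt_one_of_one_lt₀ hq
  apply dimH_le_of_hausdorffMeasure_ne_top
  set r : ℕ → ℝ≥0∞ := fun n => ENNReal.ofReal (((Fintype.card K : ℝ)⁻¹) ^ n) with hr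
  have hr0 : Tendsto r atTop (nhds 0) := by
    have h1 : Tendsto (fun n : ℕ => ((Fintype.card K : ℝ)⁻¹) ^ n) atTop (nhds 0) :=
      tendsto_pow_atTop_nhds_zero_of_lt_one (by positivity) hqinv
    have := ENNReal.tendsto_ofReal h1
    rw [ENNReal.ofReal_zero] at this
    exact this
  have hdiam : ∀ n (w : Wd B n), Metric.ediam {θ | θ ∈ B ∧ pref n θ = w.1} ≤ r n := by
    intro n w
    apply Metric.ediam_le
    rintro x ⟨hx, hxw⟩ y ⟨hy, hyw⟩
    rw [edist_dist]
    apply ENNReal.ofReal_le_ofReal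
    have h1 := (dist_le_iff (hB x hx) (hB y hy) n).mpr (by
      intro i hi
      exact congrFun (hxw.trans hyw.symm) ⟨i, hi⟩)
    refine h1.trans ?_
    rw [inv_pow, ← zpow_natCast, ← zpow_neg]
    exact zpow_le_zpow_right₀ hq.le (by omega)
  have hmain := Measure.hausdorffMeasure_le_liminf_sum (s : ℝ) B r hr0
    (fun n (w : Wd B n) => {θ | θ ∈ B ∧ pref n θ = w.1})
    (Eventually.of_forall hdiam)
    (Eventually.of_forall (fun n θ hθ => Set.mem_iUnion.mpr
      ⟨⟨pref n θ, mem_Wd.mpr ⟨θ, hθ, rfl⟩⟩, hθ, rfl⟩))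
  refine ne_top_of_le_ne_top (b := ENNReal.ofReal C) ENNReal.ofReal_ne_top (hmain.trans ?_)
  apply Filter.liminf_le_of_frequently_le _ (by isBoundedDefault)
  refine h.mono ?_
  intro n hn
  calc ∑ w : Wd B n, Metric.ediam {θ | θ ∈ B ∧ pref n θ = w.1} ^ (s:ℝ)
      ≤ ∑ w : Wd B n, r n ^ (s:ℝ) :=
        Finset.sum_le_sum (fun w _ => ENNReal.rpow_le_rpow (hdiam n w) (by positivity))
    _ = ENNReal.ofReal ((Wd B n).card * (((Fintype.card K : ℝ)⁻¹) ^ n) ^ (s:ℝ)) := by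
        rw [Finset.sum_const, Finset.card_univ, Fintype.card_coe, nsmul_eq_mul,
          ENNReal.ofReal_mul (by positivity), ENNReal.ofReal_natCast, hr,
          ENNReal.ofReal_rpow_of_nonneg (by positivity) (by positivity)]
    _ ≤ ENNReal.ofReal C := by
        apply ENNReal.ofReal_le_ofReal
        have e : (((Fintype.card K : ℝ)⁻¹) ^ n) ^ (s:ℝ) = ((Fintype.card K : ℝ) ^ ((s:ℝ) * n))⁻¹ := by
          rw [inv_pow, Real.inv_rpow (by positivity), ← Real.rpow_natCast,
            ← Real.rpow_mul (by positivity), mul_comm]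
        rw [e, ← div_eq_mul_inv, div_le_iff₀ (by positivity)]
        exact hn

lemma card_Wd_le (B : Set (FF K)) (n : ℕ) : (Wd B n).card ≤ Fintype.card K ^ n := by
  refine (Finset.card_le_univ _).trans ?_
  simp

lemma dimH_le_one (α : FF K) (ε : ℝ) : dimH (sBad α ε) ≤ 1 := by
  have := dimH_le_cover (B := sBad α ε) (fun θ h => h.1) 1 1 zero_le_one (by
    apply Eventually.frequently
    apply Eventually.of_forall
    intro n
    have h := card_Wd_le (sBad α ε) n
    simp only [NNReal.coe_one, one_mul, Real.rpow_natCast]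
    exact_mod_cast h)
  simpa using this

/-- split a word -/
def spl (d m : ℕ) (w : Fin (d + m) → K) : (Fin d → K) × (Fin m → K) :=
  (fun i => w (Fin.castAdd m i), fun i => w (Fin.natAdd d i))

lemma spl_inj (d m : ℕ) : Function.Injective (spl d m : (Fin (d + m) → K) → _) := by
  intro v w h
  funext i
  refine Fin.addCases (fun j => ?_) (fun j => ?_) i
  · exact congrFun (congrArg Prod.fst h) j
  · exact congrFun (congrArg Prod.snd h) j

lemma spl_fst_mem {B : Set (FF K)} {d m : ℕ} {w : Fin (d + m) → K} (hw : w ∈ Wd B (d + m)) :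
    (spl d m w).1 ∈ Wd B d := by
  obtain ⟨θ, hθ, rfl⟩ := mem_Wd.mp hw
  exact mem_Wd.mpr ⟨θ, hθ, rfl⟩

lemma card_Wd_add (B : Set (FF K)) (d m : ℕ) :
    (Wd B (d + m)).card ≤ (Wd B d).card * Fintype.card K ^ m := by
  have h1 : (Wd B (d+m)).image (spl d m) ⊆ (Wd B d) ×ˢ Finset.univ := by
    intro p hp
    obtain ⟨w, hw, rfl⟩ := Finset.mem_image.mp hp
    exact Finset.mem_product.mpr ⟨spl_fst_mem hw, Finset.mem_univ _⟩
  have h2 := Finset.card_le_card h1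
  rw [Finset.card_image_of_injective _ (spl_inj d m), Finset.card_product] at h2
  simpa using h2

/-- uniform version of `Bad` -/
def BB (α : FF K) (ε : ℝ) (N0 : ℕ) : Set (FF K) :=
  {θ | fnorm θ < 1 ∧ ∀ x : Polynomial K, x ≠ 0 → N0 ≤ x.natDegree →
    ε ≤ fnorm (polyF x) * sdist (α * polyF x - θ)}

lemma card_step {α : FF K} {ε : ℝ} {N0 d m : ℕ} (hm : ((Fintype.card K : ℝ)⁻¹) ^ m < ε)
    (hd : d ∈ SS α) (hdN : N0 ≤ d) :
    (Wd (BB α ε N0) (d + m)).card + (Wd (BB α ε N0) d).card ≤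
      (Wd (BB α ε N0) d).card * Fintype.card K ^ m := by
  have hq := one_lt_qR (K := K)
  set B := BB α ε N0 with hBdef
  choose X hX0 hXd hXp using (fun w : Fin d → K => exists_prefix hd w)
  set f : (Fin d → K) → (Fin d → K) × (Fin m → K) :=
    fun w => (w, fun i => dig (polyF (X w) * α) (d + i)) with hf
  have hfinj : Function.Injective f := fun v w h => congrArg Prod.fst h
  have hdisj : Disjoint ((Wd B (d+m)).image (spl d m)) ((Wd B d).image f) := by
    rw [Finset.disjoint_left]
    intro p hp hp'
    obtain ⟨w, hw, rfl⟩ := Finset.mem_image.mp hp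
    obtain ⟨v, hv, hvw⟩ := Finset.mem_image.mp hp'
    obtain ⟨θ, hθ, rfl⟩ := mem_Wd.mp hw
    have e1 : v = fun i : Fin d => dig θ i := congrArg Prod.fst hvw
    have e2 : (fun i : Fin m => dig (polyF (X v) * α) (d + i)) =
      fun i : Fin m => dig θ (d + i) := congrArg Prod.snd hvw
    have hz : ZZ (d + m) (α * polyF (X v) - θ) := by
      intro i hi
      rw [dig_sub, mul_comm, sub_eq_zero]
      by_cases h : i < d
      · have h1 := congrFun (hXp v) ⟨i, h⟩
        have h2 := congrFun e1 ⟨i, h⟩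
        exact h1.trans h2
      · have := congrFun e2 ⟨i - d, by omega⟩
        simp only at this
        rwa [show d + (i - d) = i by omega] at this
    have h1 := hθ.2 (X v) (hX0 v) (by rw [hXd]; exact hdN)
    have h2 := (sdist_le_iff _ _).mpr hz
    rw [fnorm_polyF (hX0 v), hXd] at h1
    have h3 : (Fintype.card K : ℝ) ^ d * sdist (α * polyF (X v) - θ) ≤
        ((Fintype.card K : ℝ)⁻¹) ^ m := by
      calc (Fintype.card K : ℝ) ^ d * sdist (α * polyF (X v) - θ) ≤
          (Fintype.card K : ℝ) ^ d * (Fintype.card K : ℝ) ^ (-(((d + m : ℕ) : ℤ) + 1)) := by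
            gcongr
        _ = (Fintype.card K : ℝ) ^ (-(m:ℤ) - 1) := by
            rw [← zpow_natCast, ← zpow_add₀ (by positivity)]; congr 1; push_cast; ring
        _ ≤ (Fintype.card K : ℝ) ^ (-(m:ℤ)) := zpow_le_zpow_right₀ hq.le (by omega)
        _ = ((Fintype.card K : ℝ)⁻¹) ^ m := by rw [zpow_neg, zpow_natCast, inv_pow]
    linarith
  have hsub : (Wd B (d+m)).image (spl d m) ∪ (Wd B d).image f ⊆ (Wd B d) ×ˢ Finset.univ := by
    intro p hp
    rcases Finset.mem_union.mp hp with hp | hp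
    · obtain ⟨w, hw, rfl⟩ := Finset.mem_image.mp hp
      exact Finset.mem_product.mpr ⟨spl_fst_mem hw, Finset.mem_univ _⟩
    · obtain ⟨w, hw, rfl⟩ := Finset.mem_image.mp hp
      exact Finset.mem_product.mpr ⟨hw, Finset.mem_univ _⟩
  have h2 := Finset.card_le_card hsub
  rw [Finset.card_union_of_disjoint hdisj, Finset.card_image_of_injective _ (spl_inj d m),
    Finset.card_image_of_injective _ hfinj, Finset.card_product] at h2
  simpa using h2

lemma decay {u : ℕ → ℝ} (hanti : Antitone u) (h0 : u 0 ≤ 1) (T : ℕ → Prop)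
    {m : ℕ} (hm0 : 0 < m) {σ : ℝ} (hσ0 : 0 ≤ σ) (hσ1 : σ ≤ 1) (hT : ∀ d, T d → u (d + m) ≤ σ ^ m * u d) :
    ∀ n, u (n + m) ≤ σ ^ (Nat.count T (n + 1)) := by
  have hu1 : ∀ n, u n ≤ 1 := fun n => (hanti (Nat.zero_le n)).trans h0
  intro n
  induction n using Nat.strong_induction_on with
  | _ n ih =>
    by_cases hn : T n
    · refine (hT n hn).trans ?_
      by_cases hnm : n < m
      · calc σ ^ m * u n ≤ σ ^ m * 1 := by gcongr; exact hu1 n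
          _ ≤ σ ^ (Nat.count T (n + 1)) := by
            rw [mul_one]
            exact pow_le_pow_of_le_one hσ0 hσ1 ((Nat.count_le _).trans (by omega))
      · obtain ⟨k, rfl⟩ : ∃ k, n = k + m := ⟨n - m, by omega⟩
        have h1 := ih k (by omega)
        calc σ ^ m * u (k + m) ≤ σ ^ m * σ ^ (Nat.count T (k + 1)) := by gcongr
          _ = σ ^ (m + Nat.count T (k + 1)) := by rw [pow_add]
          _ ≤ _ := by
            apply pow_le_pow_of_le_one hσ0 hσ1
            rw [show k + m + 1 = (k + 1) + m by ring, Nat.count_add]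
            have := Nat.count_le (p := fun j => T (k + 1 + j)) (n := m)
            omega
    · cases n with
      | zero =>
        have : Nat.count T (0 + 1) = 0 := by simp [Nat.count_succ, hn]
        rw [this, pow_zero]; exact hu1 _
      | succ k =>
        rw [Nat.count_succ, if_neg hn, add_zero]
        exact (hanti (by omega)).trans (ih k (by omega))

lemma card_bound {α : FF K} {ε : ℝ} {m : ℕ} (hm : ((Fintype.card K : ℝ)⁻¹) ^ m < ε)
    (hm0 : 0 < m) (N0 : ℕ) {σ : ℝ} (hσ0 : 0 ≤ σ) (hσ1 : σ ≤ 1)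
    (hσ : σ ^ m = 1 - ((Fintype.card K : ℝ)⁻¹) ^ m) (n : ℕ) :
    ((Wd (BB α ε N0) (n + m)).card : ℝ) ≤
      (Fintype.card K : ℝ) ^ (n + m) * σ ^ (Nat.count (fun d => d ∈ SS α ∧ N0 ≤ d) (n + 1)) := by
  have hq := one_lt_qR (K := K)
  set B := BB α ε N0 with hBdef
  set q : ℝ := (Fintype.card K : ℝ) with hqd
  have hq0 : 0 < q := by linarith
  set u : ℕ → ℝ := fun n => ((Wd B n).card : ℝ) / q ^ n with hu
  have hanti : Antitone u := by
    apply antitone_nat_of_succ_le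
    intro k
    have h1 := card_Wd_add B k 1
    have h2 : ((Wd B (k+1)).card : ℝ) ≤ (Wd B k).card * q := by
      rw [pow_one] at h1
      rw [hqd]
      exact_mod_cast h1
    simp only [hu]
    rw [div_le_div_iff₀ (by positivity) (by positivity), pow_succ]
    calc ((Wd B (k+1)).card : ℝ) * q ^ k ≤ ((Wd B k).card * q) * q ^ k := by gcongr
      _ = _ := by ring
  have h0 : u 0 ≤ 1 := by
    have := card_Wd_le B 0
    simp only [pow_zero] at this
    simp only [hu, pow_zero, div_one]
    exact_mod_cast this
  have hstep : ∀ d, (d ∈ SS α ∧ N0 ≤ d) → u (d + m) ≤ σ ^ m * u d := by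
    rintro d ⟨hd, hdN⟩
    have h1 := card_step hm hd hdN
    have h2 : ((Wd B (d+m)).card : ℝ) + (Wd B d).card ≤ (Wd B d).card * q ^ m := by
      rw [hqd]
      exact_mod_cast h1
    simp only [hu]
    rw [hσ, div_le_iff₀ (by positivity), pow_add, inv_pow]
    have e : (1 - (q ^ m)⁻¹) * (((Wd B d).card : ℝ) / q ^ d) * (q ^ d * q ^ m) =
      (Wd B d).card * q ^ m - (Wd B d).card := by
      field_simp
    rw [e]; linarith
  have := decay hanti h0 (fun d => d ∈ SS α ∧ N0 ≤ d) hm0 hσ0 hσ1 hstep n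
  simp only [hu] at this
  rw [div_le_iff₀ (by positivity)] at this
  refine this.trans (le_of_eq ?_)
  rw [mul_comm]
  congr!

lemma count_ge (α : FF K) (N0 n : ℕ) :
    cS α n ≤ Nat.count (fun d => d ∈ SS α ∧ N0 ≤ d) (n + 1) + N0 := by
  rw [Nat.count_eq_card_filter_range, cS]
  have : (Finset.range n).filter (fun d => d ∈ SS α) ⊆
      (Finset.range (n+1)).filter (fun d => d ∈ SS α ∧ N0 ≤ d) ∪ Finset.range N0 := by
    intro d hd
    simp only [Finset.mem_filter, Finset.mem_range, Finset.mem_union] at hd ⊢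
    by_cases h : d < N0
    · exact Or.inr h
    · exact Or.inl ⟨by omega, hd.2, by omega⟩
  refine (Finset.card_le_card this).trans ((Finset.card_union_le _ _).trans ?_)
  simp

lemma sBad_sub (α : FF K) {ε : ℝ} (hε : 0 < ε) : sBad α ε ⊆ ⋃ N0, BB α (ε / 2) N0 := by
  rintro θ ⟨h1, h2⟩
  have hq := one_lt_qR (K := K)
  have hlt : ENNReal.ofReal (ε / 2) < sBadLiminf α θ :=
    lt_of_lt_of_le ((ENNReal.ofReal_lt_ofReal_iff hε).mpr (by linarith)) h2
  have hev := eventually_lt_of_lt_liminf hlt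
  rw [eventually_comap] at hev
  obtain ⟨a, ha⟩ := eventually_atTop.mp hev
  obtain ⟨N0, hN0⟩ := pow_unbounded_of_one_lt a hq
  refine Set.mem_iUnion.mpr ⟨N0, h1, ?_⟩
  intro x hx hxN
  have h3 : a ≤ fnorm (polyF x) := by
    rw [fnorm_polyF hx]
    exact hN0.le.trans (pow_le_pow_right₀ hq.le hxN)
  have h4 := ha _ h3 x rfl
  exact ((ENNReal.ofReal_lt_ofReal_iff_of_nonneg (by positivity)).mp h4).le

lemma dimH_lt_one {α : FF K} (h : ¬ DZ α) {ε : ℝ} (hε : 0 < ε) : dimH (sBad α ε) < 1 := by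
  have hq := one_lt_qR (K := K)
  unfold DZ at h
  push Not at h
  obtain ⟨η, hη, hfreq⟩ := h
  set q : ℝ := (Fintype.card K : ℝ) with hqd
  have hq0 : 0 < q := by linarith
  have hqi : q⁻¹ < 1 := inv_lt_one_of_one_lt₀ hq
  have hqi0 : 0 < q⁻¹ := by positivity
  obtain ⟨m', hm'⟩ := exists_pow_lt_of_lt_one (show 0 < ε / 2 by linarith) hqi
  set m := m' + 1 with hmdef
  have hm0 : 0 < m := by omega
  have hm : q⁻¹ ^ m < ε / 2 :=
    lt_of_le_of_lt (pow_le_pow_of_le_one hqi0.le hqi.le (by omega)) hm'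
  set ρ : ℝ := 1 - q⁻¹ ^ m with hρ
  have hρ1 : ρ < 1 := by have : 0 < q⁻¹ ^ m := by positivity
                         linarith
  have hρ0 : 0 < ρ := by
    have : q⁻¹ ^ m < 1 := pow_lt_one₀ hqi0.le hqi (by omega)
    linarith
  set σ : ℝ := ρ ^ ((m:ℝ)⁻¹) with hσdef
  have hσ0 : 0 < σ := Real.rpow_pos_of_pos hρ0 _
  have hσ1 : σ < 1 := Real.rpow_lt_one hρ0.le hρ1 (by positivity)
  have hσ : σ ^ m = ρ := Real.rpow_inv_natCast_pow hρ0.le (by omega)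
  -- σ = q ^ (-τ)
  set τ : ℝ := -Real.logb q σ with hτ
  have hτ0 : 0 < τ := by
    have := Real.logb_neg hq hσ0 hσ1
    linarith
  have hστ : σ = q ^ (-τ) := by
    rw [hτ, neg_neg, Real.rpow_logb hq0 hq.ne' hσ0]
  set s : ℝ≥0 := (1 - η * τ).toNNReal with hs
  have hs1 : s < 1 := by
    rw [hs, Real.toNNReal_lt_one]
    have := mul_pos hη hτ0
    linarith
  have hsge : 1 - η * τ ≤ (s:ℝ) := Real.le_coe_toNNReal _
  have hBB : ∀ N0, dimH (BB α (ε / 2) N0) ≤ s := by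
    intro N0
    apply dimH_le_cover (fun θ h => h.1) s (q ^ (η * τ * m + τ * N0)) (by positivity)
    apply (tendsto_add_atTop_nat m).frequently
    refine hfreq.mono ?_
    intro n hn
    have h1 := card_bound hm hm0 N0 hσ0.le hσ1.le hσ n (α := α)
    have h2 := count_ge α N0 n
    set c := Nat.count (fun d => d ∈ SS α ∧ N0 ≤ d) (n + 1)
    have h2' : (cS α n : ℝ) ≤ c + N0 := by exact_mod_cast h2
    refine h1.trans ?_
    rw [hστ, ← Real.rpow_natCast, ← Real.rpow_natCast, ← Real.rpow_mul hq0.le,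
      ← Real.rpow_add hq0, ← Real.rpow_add hq0]
    apply Real.rpow_le_rpow_of_exponent_le hq.le
    have h3 : η * n ≤ c + N0 := by linarith
    have h4 : τ * (η * n) ≤ τ * (c + N0) := by gcongr
    have h5 : (1 - η * τ) * ((n + m : ℕ) : ℝ) ≤ s * ((n + m : ℕ) : ℝ) := by gcongr
    push_cast at h5 ⊢
    nlinarith
  calc dimH (sBad α ε) ≤ dimH (⋃ N0, BB α (ε / 2) N0) := dimH_mono (sBad_sub α hε)
    _ = ⨆ N0, dimH (BB α (ε / 2) N0) := dimH_iUnion _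
    _ ≤ s := iSup_le hBB
    _ < 1 := by exact_mod_cast hs1

end FPSDAx

/-- For an irrational `α ∈ 𝕀`: there exists `ε > 0` such that `Bad^ε(α)` has full
Hausdorff dimension if and only if `α` is singular on average. -/
theorem dimH_sBad_iff_singular {K : Type*} [Field K] [Fintype K]
    (α : FF K) (hα : fnorm α < 1) (hirr : FIrrational α) :
    (∃ ε : ℝ, 0 < ε ∧ dimH (sBad α ε) = 1) ↔ SingularOnAverage α := by
  constructor
  · rintro ⟨ε, hε, hdim⟩
    apply FPSDAx.soa_of_DZ
    by_contra h
    have := FPSDAx.dimH_lt_one h hε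
    rw [hdim] at this
    exact lt_irrefl _ this
  · intro h
    have hq := FPSDAx.one_lt_qR (K := K)
    exact ⟨(Fintype.card K : ℝ) ^ (-2 : ℤ), by positivity,
      le_antisymm (FPSDAx.dimH_le_one α _) (FPSDAx.one_le_dimH (FPSDAx.DZ_of_soa h))⟩
end
end

section
/- Let ξ ∈ 𝔽_q((z⁻¹)) be an irrational power series. For every θ ∈ 𝔽_q((z⁻¹)) not belonging to 𝔽_q[z] + ξ𝔽_q[z], one has 1/ω((ξ)) ≤ ω̂((ξ), θ) ≤ ω((ξ)). -/
/-!
Common setup: the field `𝔽_q((z⁻¹))` of formal power series over a finite field `K` of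
cardinality `q`, modeled as the field `FF K` of formal Laurent series in `t = z⁻¹`,
together with its non-Archimedean norm, the embedding of the polynomial ring `𝔽_q[z]`,
distances to polynomial (vectors), Diophantine exponents, `Bad` sets, continued fractions
and best approximation sequences.
-/

open scoped Classical ENNReal NNReal
open Filter

noncomputable section

set_option linter.unusedSectionVars false

open FPSDA MeasureTheory

namespace FPSDA

section Aux

variable {K : Type*} [Field K] [Fintype K]

lemma aux_q_gt : (1 : ℝ) < (Fintype.card K : ℝ) := by
  exact_mod_cast Fintype.one_lt_card

lemma aux_fnorm_le (x : FF K) (n : ℤ) (h : ∀ i < n, (toL x).coeff i = 0) :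
    fnorm x ≤ (Fintype.card K : ℝ) ^ (-n) := by
  unfold fnorm
  split_ifs with h0
  · exact zpow_nonneg (by positivity) _
  · apply zpow_le_zpow_right₀ one_le_q
    by_contra hc
    exact (HahnSeries.coeff_order_eq_zero.not.mpr h0) (h _ (by omega))

lemma aux_le_fnorm (x : FF K) (n : ℤ) (h : (toL x).coeff n ≠ 0) :
    (Fintype.card K : ℝ) ^ (-n) ≤ fnorm x := by
  unfold fnorm
  split_ifs with h0
  · rw [h0] at h; simp at h
  · apply zpow_le_zpow_right₀ one_le_q
    have := HahnSeries.order_le_of_coeff_ne_zero h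
    omega

lemma aux_polyF_sub (P Q : Polynomial K) : (polyF (P - Q) : FF K) = polyF P - polyF Q :=
  map_sub (Polynomial.aeval (R := K) (HahnSeries.single (-1 : ℤ) (1 : K))) P Q

lemma aux_polyF_add (P Q : Polynomial K) : (polyF (P + Q) : FF K) = polyF P + polyF Q :=
  map_add (Polynomial.aeval (R := K) (HahnSeries.single (-1 : ℤ) (1 : K))) P Q

lemma aux_polyF_monomial (j : ℕ) (a : K) :
    toL (polyF (Polynomial.monomial j a) : FF K) = HahnSeries.single (-(j : ℤ)) a := by
  unfold polyF toL
  have hC : (algebraMap K (HahnSeries ℤ K)) a = HahnSeries.C a := by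
    have h1 : (algebraMap K (HahnSeries ℤ K)) a =
        HahnSeries.ofPowerSeries ℤ K (PowerSeries.C a) := rfl
    rw [h1, HahnSeries.ofPowerSeries_C]
  rw [Polynomial.aeval_monomial, HahnSeries.single_pow]
  erw [hC]
  simp [HahnSeries.C_apply]

lemma aux_coeff_mul_monomial (x : FF K) (j : ℕ) (a : K) (n : ℤ) :
    (toL (x * polyF (Polynomial.monomial j a))).coeff n = (toL x).coeff (n + j) * a := by
  have : toL (x * polyF (Polynomial.monomial j a)) =
      toL x * HahnSeries.single (-(j : ℤ)) a := by
    rw [← aux_polyF_monomial]; rfl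
  rw [this, HahnSeries.coeff_mul_single, sub_neg_eq_add]

lemma aux_coeff_mul_sum (x : FF K) (s : Finset ℕ) (v : ℕ → K) (n : ℤ) :
    (toL (x * polyF (∑ j ∈ s, Polynomial.monomial j (v j)))).coeff n =
      ∑ j ∈ s, (toL x).coeff (n + j) * v j := by
  induction s using Finset.induction_on with
  | empty =>
    have : (polyF (0 : Polynomial K) : FF K) = 0 :=
      map_zero (Polynomial.aeval (R := K) (HahnSeries.single (-1 : ℤ) (1 : K)))
    simp [this]
  | insert a s ha ih =>
    rw [Finset.sum_insert ha, Finset.sum_insert ha, aux_polyF_add, mul_add, toL_add,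
      HahnSeries.coeff_add, ih, aux_coeff_mul_monomial]

lemma aux_coeff_sum (s : Finset ℕ) (v : ℕ → K) (n : ℤ) :
    (toL (polyF (∑ j ∈ s, Polynomial.monomial j (v j)) : FF K)).coeff n =
      ∑ j ∈ s, if n + j = 0 then v j else 0 := by
  have h := aux_coeff_mul_sum (1 : FF K) s v n
  rw [one_mul] at h
  rw [h]
  refine Finset.sum_congr rfl fun j _ => ?_
  have : toL (1 : FF K) = 1 := rfl
  rw [this, HahnSeries.coeff_one]
  split_ifs <;> simp

lemma aux_polyF_coeff_pos (P : Polynomial K) (n : ℤ) (hn : 0 < n) :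
    (toL (polyF P : FF K)).coeff n = 0 := by
  rw [P.as_sum_range, aux_coeff_sum]
  refine Finset.sum_eq_zero fun j _ => ?_
  rw [if_neg (by omega)]

lemma aux_int (x : FF K) : ∃ P : Polynomial K, ∀ n ≤ (0 : ℤ),
    (toL (x - polyF P)).coeff n = 0 := by
  refine ⟨intPoly x, fun n hn => ?_⟩
  unfold intPoly
  rw [toL_sub, HahnSeries.coeff_sub, aux_coeff_sum, sub_eq_zero]
  by_cases h : n < (toL x).order
  · rw [HahnSeries.coeff_eq_zero_of_lt_order h]
    symm
    refine Finset.sum_eq_zero fun j hj => ?_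
    rw [Finset.mem_range] at hj
    by_cases h2 : n + j = 0
    · rw [if_pos h2]
      exact HahnSeries.coeff_eq_zero_of_lt_order (by omega)
    · rw [if_neg h2]
  · rw [Finset.sum_eq_single (-n).toNat]
    · rw [if_pos (by omega)]
      congr 1; omega
    · intro j _ hj
      rw [if_neg (by omega)]
    · intro hj
      rw [Finset.mem_range] at hj
      omega

lemma aux_bdd (x : FF K) :
    BddBelow (Set.range fun y : Polynomial K => fnorm (x - polyF y)) :=
  ⟨0, by rintro _ ⟨y, rfl⟩; exact fnorm_nonneg _⟩

lemma aux_sdist_le (x : FF K) (M : ℕ) (h : ∀ i < M, (toL x).coeff ((i : ℤ) + 1) = 0) :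
    sdist x ≤ (Fintype.card K : ℝ) ^ (-((M : ℤ) + 1)) := by
  obtain ⟨P, hP⟩ := aux_int x
  refine (ciInf_le (aux_bdd x) P).trans ?_
  apply aux_fnorm_le
  intro i hi
  by_cases h0 : i ≤ 0
  · exact hP i h0
  · rw [toL_sub, HahnSeries.coeff_sub, aux_polyF_coeff_pos _ _ (by omega), sub_zero]
    have := h (i - 1).toNat (by omega)
    rwa [show (((i - 1).toNat : ℕ) : ℤ) + 1 = i by omega] at this

lemma aux_sdist_pos (x : FF K) (h : ∀ P : Polynomial K, x ≠ polyF P) : 0 < sdist x := by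
  obtain ⟨P, hP⟩ := aux_int x
  have h1 : x - polyF P ≠ 0 := sub_ne_zero.mpr (h P)
  have h2 : ∃ n, (toL (x - polyF P)).coeff n ≠ 0 := by
    by_contra hc
    push Not at hc
    apply h1
    apply toL_eq_zero.mp
    ext n
    exact hc n
  obtain ⟨n, hn⟩ := h2
  have hn0 : 0 < n := by
    by_contra hc
    exact hn (hP n (by omega))
  have hq : (0 : ℝ) < (Fintype.card K : ℝ) ^ (-n) :=
    zpow_pos (lt_trans one_pos aux_q_gt) _
  refine lt_of_lt_of_le hq (le_ciInf fun y => aux_le_fnorm _ n ?_)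
  rw [toL_sub, HahnSeries.coeff_sub, aux_polyF_coeff_pos _ _ hn0] at hn ⊢
  exact hn

lemma aux_sdist_sub (x y : FF K) (r : ℝ) (hx : sdist x ≤ r) (hy : sdist y ≤ r) :
    sdist (x - y) ≤ r := by
  refine le_of_forall_pos_lt_add fun ε hε => ?_
  obtain ⟨P, hP⟩ := exists_lt_of_ciInf_lt (lt_of_le_of_lt hx (lt_add_of_pos_right r hε))
  obtain ⟨Q, hQ⟩ := exists_lt_of_ciInf_lt (lt_of_le_of_lt hy (lt_add_of_pos_right r hε))
  refine lt_of_le_of_lt (ciInf_le (aux_bdd (x - y)) (P - Q)) ?_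
  have h : x - y - polyF (P - Q) = (x - polyF P) + -(y - polyF Q) := by
    rw [aux_polyF_sub]; ring
  simp only [h]
  refine lt_of_le_of_lt (fnorm_add_le _ _) (max_lt hP ?_)
  rw [fnorm_neg]; exact hQ

/-- Linear algebra: injectivity of a matrix gives surjectivity of the transpose. -/
lemma aux_transpose_surj {M N : ℕ} (A : Matrix (Fin M) (Fin N) K)
    (h : ∀ v, A.mulVec v = 0 → v = 0) : Function.Surjective A.transpose.mulVec := by
  have hinj : Function.Injective A.mulVecLin := by
    rw [injective_iff_map_eq_zero]
    exact h
  have h1 : A.rank = N := by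
    have := LinearMap.finrank_range_of_inj hinj
    simpa [Matrix.rank] using this
  have h2 : A.transpose.rank = N := by rw [Matrix.rank_transpose, h1]
  have h3 : LinearMap.range A.transpose.mulVecLin = ⊤ := by
    apply Submodule.eq_top_of_finrank_eq
    have : A.transpose.rank = Module.finrank K (Fin N → K) := by simp [h2]
    exact this
  exact LinearMap.range_eq_top.mp h3

def auxV {N : ℕ} (v : Fin N → K) : ℕ → K := fun j => if h : j < N then v ⟨j, h⟩ else 0

def auxP {N : ℕ} (v : Fin N → K) : Polynomial K :=
  ∑ j ∈ Finset.range N, Polynomial.monomial j (auxV v j)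

lemma auxP_coeff {N : ℕ} (x : FF K) (v : Fin N → K) (n : ℤ) :
    (toL (x * polyF (auxP v))).coeff n = ∑ j : Fin N, (toL x).coeff (n + (j : ℕ)) * v j := by
  unfold auxP
  rw [aux_coeff_mul_sum, Finset.sum_range]
  simp [auxV]

lemma auxP_ne {N : ℕ} (v : Fin N → K) (hv : v ≠ 0) : auxP v ≠ 0 := by
  intro h
  apply hv
  ext j
  have := congrArg (fun P => Polynomial.coeff P (j : ℕ)) h
  simpa [auxP, Polynomial.finsetSum_coeff, Polynomial.coeff_monomial, auxV] using this

lemma auxP_norm {n : ℕ} (v : Fin (n + 1) → K) :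
    fnorm (polyF (auxP v) : FF K) ≤ (Fintype.card K : ℝ) ^ n := by
  have := aux_fnorm_le (polyF (auxP v) : FF K) (-(n : ℤ)) (by
    intro i hi
    unfold auxP
    rw [aux_coeff_sum]
    refine Finset.sum_eq_zero fun j hj => ?_
    rw [Finset.mem_range] at hj
    rw [if_neg (by omega)])
  simpa using this

lemma aux_transfer (ξ θ : FF K) (m n : ℕ)
    (h : ∀ x : Polynomial K, x ≠ 0 → fnorm (polyF x : FF K) ≤ (Fintype.card K : ℝ) ^ n →
      ¬ sdist (ξ * polyF x) ≤ (Fintype.card K : ℝ) ^ (-((m : ℤ) + 2))) :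
    ∃ x : Polynomial K, fnorm (polyF x : FF K) ≤ (Fintype.card K : ℝ) ^ m ∧
      sdist (ξ * polyF x - θ) ≤ (Fintype.card K : ℝ) ^ (-((n : ℤ) + 2)) := by
  let A : Matrix (Fin (m + 1)) (Fin (n + 1)) K :=
    fun i j => (toL ξ).coeff ((i : ℕ) + 1 + (j : ℕ))
  have hA : ∀ v, A.mulVec v = 0 → v = 0 := by
    intro v hv
    by_contra hne
    refine h (auxP v) (auxP_ne v hne) (auxP_norm v) ?_
    have := aux_sdist_le (ξ * polyF (auxP v)) (m + 1) (by
      intro i hi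
      rw [auxP_coeff]
      exact congrFun hv ⟨i, hi⟩)
    convert this using 2
    push_cast; ring
  obtain ⟨w, hw⟩ := aux_transpose_surj A hA (fun j => (toL θ).coeff (((j : ℕ) : ℤ) + 1))
  refine ⟨auxP w, auxP_norm w, ?_⟩
  have := aux_sdist_le (ξ * polyF (auxP w) - θ) (n + 1) (by
      intro i hi
      rw [toL_sub, HahnSeries.coeff_sub, auxP_coeff, sub_eq_zero]
      have h2 := congrFun hw ⟨i, hi⟩
      rw [← h2]
      refine Finset.sum_congr rfl fun j _ => ?_
      show _ = A j ⟨i, hi⟩ * w j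
      simp only [A]
      congr 2
      ring)
  convert this using 2
  push_cast; ring

lemma aux_lower (ξ θ : FF K) (w : ℝ) (hw : 0 < w)
    (hnot : ∃ H₀ : ℝ, ∀ H : ℝ, H₀ ≤ H → ¬ ∃ x : Polynomial K, x ≠ 0 ∧
      sdist (ξ * polyF x) ≤ H ^ (-w) ∧ fnorm (polyF x) ≤ H) :
    ∃ H₀ : ℝ, ∀ H : ℝ, H₀ ≤ H → sSolv ξ θ w⁻¹ H := by
  obtain ⟨H₀, hH₀⟩ := hnot
  have hq : (1 : ℝ) < (Fintype.card K : ℝ) := aux_q_gt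
  set q : ℝ := (Fintype.card K : ℝ) with hqdef
  have hq0 : 0 < q := lt_trans one_pos hq
  refine ⟨max 1 ((max H₀ 1) ^ w), fun H hH => ?_⟩
  have hH1 : 1 ≤ H := (le_max_left _ _).trans hH
  have hHpos : 0 < H := lt_of_lt_of_le one_pos hH1
  have hH2 : (max H₀ 1) ^ w ≤ H := (le_max_right _ _).trans hH
  set L := Real.logb q H with hL
  have hL0 : 0 ≤ L := Real.logb_nonneg hq hH1
  have hqL : q ^ L = H := Real.rpow_logb hq0 hq.ne' hHpos
  set m := ⌊L⌋₊ with hm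
  set n := ⌊((m : ℝ) + 2) / w⌋₊ with hn
  have hmL : (m : ℝ) ≤ L := Nat.floor_le hL0
  have hLm : L < m + 1 := Nat.lt_floor_add_one L
  have hnn : (n : ℝ) ≤ ((m : ℝ) + 2) / w := Nat.floor_le (by positivity)
  have hnn2 : ((m : ℝ) + 2) / w < n + 1 := Nat.lt_floor_add_one _
  have hbig : H₀ ≤ q ^ (((m : ℝ) + 2) / w) := by
    have h1 : max H₀ 1 ≤ H ^ (w⁻¹) := by
      have h0 : (0 : ℝ) ≤ max H₀ 1 := le_trans zero_le_one (le_max_right _ _)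
      have := Real.rpow_le_rpow (Real.rpow_nonneg h0 w) hH2 (inv_nonneg.mpr hw.le)
      rwa [Real.rpow_rpow_inv h0 hw.ne'] at this
    refine (le_max_left _ _).trans (h1.trans ?_)
    rw [← hqL, ← Real.rpow_mul hq0.le]
    apply Real.rpow_le_rpow_of_exponent_le hq.le
    rw [div_eq_mul_inv]
    exact mul_le_mul_of_nonneg_right (by linarith) (inv_nonneg.mpr hw.le)
  obtain ⟨x, hx1, hx2⟩ := aux_transfer ξ θ m n (by
    intro x hx0 hxn hxs
    refine hH₀ _ hbig ⟨x, hx0, hxs.trans (le_of_eq ?_), hxn.trans ?_⟩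
    · rw [← Real.rpow_mul hq0.le, ← Real.rpow_intCast]
      congr 1
      push_cast
      field_simp
    · rw [← Real.rpow_natCast]
      exact Real.rpow_le_rpow_of_exponent_le hq.le hnn)
  refine ⟨x, hx2.trans ?_, hx1.trans ?_⟩
  · rw [← hqL, ← Real.rpow_mul hq0.le, ← Real.rpow_intCast]
    apply Real.rpow_le_rpow_of_exponent_le hq.le
    push_cast
    have : L * w⁻¹ ≤ ((m : ℝ) + 2) / w := by
      rw [div_eq_mul_inv]
      exact mul_le_mul_of_nonneg_right (by linarith) (inv_nonneg.mpr hw.le)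
    linarith
  · rw [← hqL, ← Real.rpow_natCast]
    exact Real.rpow_le_rpow_of_exponent_le hq.le hmL

lemma aux_upper (ξ θ : FF K)
    (hθ : ¬ ∃ a b : Polynomial K, θ = polyF a + ξ * polyF b) (w w' : ℝ) (hw' : 0 ≤ w')
    (hww : w' < w) (h : ∃ H₀ : ℝ, ∀ H : ℝ, H₀ ≤ H → sSolv ξ θ w H) :
    ∀ H₀ : ℝ, ∃ H : ℝ, H₀ ≤ H ∧ ∃ x : Polynomial K, x ≠ 0 ∧
      sdist (ξ * polyF x) ≤ H ^ (-w') ∧ fnorm (polyF x) ≤ H := by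
  intro H₁
  obtain ⟨H₀, hH₀⟩ := h
  have hq : (1 : ℝ) < (Fintype.card K : ℝ) := aux_q_gt
  set q : ℝ := (Fintype.card K : ℝ) with hqdef
  have hq0 : 0 < q := lt_trans one_pos hq
  have hw : 0 < w := lt_of_le_of_lt hw' hww
  have htend := tendsto_pow_atTop_atTop_of_one_lt hq
  have hev : ∀ᶠ k : ℕ in atTop, max H₀ H₁ ≤ q ^ k ∧ w' / (w - w') ≤ (k : ℝ) :=
    (htend.eventually_ge_atTop _).and (tendsto_natCast_atTop_atTop.eventually_ge_atTop _)
  obtain ⟨k₀, hk₀⟩ := eventually_atTop.mp hev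
  have hsol : ∀ k, ∃ x : Polynomial K, k₀ ≤ k →
      sdist (ξ * polyF x - θ) ≤ (q ^ k) ^ (-w) ∧ fnorm (polyF x) ≤ q ^ k := by
    intro k
    by_cases hk : k₀ ≤ k
    · obtain ⟨x, hx⟩ := hH₀ (q ^ k) ((le_max_left _ _).trans (hk₀ k hk).1)
      exact ⟨x, fun _ => hx⟩
    · exact ⟨0, fun h => absurd h hk⟩
  choose x hx using hsol
  have hchange : ∃ k, k₀ ≤ k ∧ x k ≠ x (k + 1) := by
    by_contra hc
    push Not at hc
    have hconst : ∀ k, k₀ ≤ k → x k = x k₀ := by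
      intro k hk
      induction k, hk using Nat.le_induction with
      | base => rfl
      | succ k hk ih => rw [← hc k hk, ih]
    have hpos : 0 < sdist (ξ * polyF (x k₀) - θ) := by
      apply aux_sdist_pos
      intro P hP
      apply hθ
      refine ⟨-P, x k₀, ?_⟩
      have : (polyF (-P) : FF K) = - polyF P :=
        map_neg (Polynomial.aeval (R := K) (HahnSeries.single (-1 : ℤ) (1 : K))) P
      rw [this, ← hP]; ring
    have ht : Tendsto (fun k : ℕ => (q ^ k) ^ (-w)) atTop (nhds 0) :=
      (tendsto_rpow_neg_atTop hw).comp htend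
    have hle : sdist (ξ * polyF (x k₀) - θ) ≤ 0 := by
      refine ge_of_tendsto ht ?_
      filter_upwards [eventually_ge_atTop k₀] with k hk
      have := (hx k hk).1
      rwa [hconst k hk] at this
    linarith
  obtain ⟨k, hk, hne⟩ := hchange
  refine ⟨q ^ (k + 1), ?_, x k - x (k + 1), sub_ne_zero.mpr hne, ?_, ?_⟩
  · exact (le_max_right _ _).trans (hk₀ (k + 1) (by omega)).1
  · have e : ξ * polyF (x k - x (k + 1)) =
        (ξ * polyF (x k) - θ) - (ξ * polyF (x (k + 1)) - θ) := by
      rw [aux_polyF_sub]; ring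
    rw [e]
    have hmono : (q ^ (k + 1)) ^ (-w) ≤ (q ^ k) ^ (-w) :=
      Real.rpow_le_rpow_of_nonpos (by positivity)
        (pow_le_pow_right₀ hq.le (by omega)) (by linarith)
    refine (aux_sdist_sub _ _ _ (hx k hk).1 ((hx (k + 1) (by omega)).1.trans hmono)).trans ?_
    rw [← Real.rpow_natCast, ← Real.rpow_natCast, ← Real.rpow_mul hq0.le,
      ← Real.rpow_mul hq0.le]
    apply Real.rpow_le_rpow_of_exponent_le hq.le
    have h2 := (hk₀ k hk).2
    rw [div_le_iff₀ (by linarith)] at h2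
    push_cast
    linarith
  · rw [aux_polyF_sub, sub_eq_add_neg]
    refine (fnorm_add_le _ _).trans (max_le ?_ ?_)
    · exact (hx k hk).2.trans (pow_le_pow_right₀ hq.le (by omega))
    · rw [fnorm_neg]; exact (hx (k + 1) (by omega)).2

end Aux

end FPSDA

/-- For an irrational `ξ` and any `θ` not in `𝔽_q[z] + ξ 𝔽_q[z]`, one has
`1/ω((ξ)) ≤ ω̂((ξ), θ) ≤ ω((ξ))` (with `1/∞ = 0`). -/
theorem somegaHatInhom_bounds {K : Type*} [Field K] [Fintype K]
    (ξ : FF K) (hirr : FIrrational ξ) (θ : FF K)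
    (hθ : ¬ ∃ a b : Polynomial K, θ = polyF a + ξ * polyF b) :
    (somegaHom ξ)⁻¹ ≤ somegaHatInhom ξ θ ∧ somegaHatInhom ξ θ ≤ somegaHom ξ := by
  constructor
  · rw [ENNReal.inv_le_iff_inv_le]
    refine le_of_forall_gt_imp_ge_of_dense fun r hr => ?_
    rw [← ENNReal.inv_le_iff_inv_le]
    by_cases hrt : r = ⊤
    · simp [hrt]
    have hr0 : 0 < r := lt_of_le_of_lt zero_le hr
    have hw : 0 < r.toReal := ENNReal.toReal_pos hr0.ne' hrt
    have hset := aux_lower ξ θ r.toReal hw (by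
      by_contra hc
      push Not at hc
      have h1 : ENNReal.ofReal r.toReal ≤ somegaHom ξ := by
        unfold somegaHom
        exact le_iSup₂_of_le r.toReal hc le_rfl
      rw [ENNReal.ofReal_toReal hrt] at h1
      exact absurd hr (not_lt.mpr h1))
    have h2 : ENNReal.ofReal (r.toReal)⁻¹ ≤ somegaHatInhom ξ θ := by
      unfold somegaHatInhom
      exact le_iSup₂_of_le (r.toReal)⁻¹ hset le_rfl
    rwa [ENNReal.ofReal_inv_of_pos hw, ENNReal.ofReal_toReal hrt] at h2
  · unfold somegaHatInhom
    refine iSup₂_le fun w hw => ?_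
    refine le_of_forall_lt_imp_le_of_dense fun r hr => ?_
    have hrt : r ≠ ⊤ := ne_top_of_lt hr
    have hlt : r.toReal < w := by
      rw [← ENNReal.ofReal_toReal hrt] at hr
      exact (ENNReal.ofReal_lt_ofReal_iff_of_nonneg ENNReal.toReal_nonneg).mp hr
    have hset := aux_upper ξ θ hθ w r.toReal ENNReal.toReal_nonneg hlt hw
    rw [← ENNReal.ofReal_toReal hrt]
    unfold somegaHom
    exact le_iSup₂_of_le r.toReal hset le_rfl
end
end

section
/- Let m, n be positive integers, A ∈ M_{n,m}(𝔽_q((z⁻¹))), and s, t positive integers. Suppose that M(y) = ⟨Aᵀy⟩ ≥ q^{−t} for every nonzero polynomial vector y ∈ 𝔽_q[z]ⁿ of norm ‖y‖ ≤ q^s. Then for every θ = (θ_1, …, θ_n) ∈ 𝔽_q((z⁻¹))ⁿ there exists a polynomial vector x ∈ 𝔽_q[z]^m with ‖x‖ ≤ q^t such that max_{1≤i≤n} ⟨L_i(x) − θ_i⟩ ≤ q^{−s}. -/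
/-!
Common setup: the field `𝔽_q((z⁻¹))` of formal power series over a finite field `K` of
cardinality `q`, modeled as the field `FF K` of formal Laurent series in `t = z⁻¹`,
together with its non-Archimedean norm, the embedding of the polynomial ring `𝔽_q[z]`,
distances to polynomial (vectors), Diophantine exponents, `Bad` sets, continued fractions
and best approximation sequences.
-/

open scoped Classical ENNReal NNReal
open Filter

noncomputable section

set_option linter.unusedSectionVars false

open FPSDA MeasureTheory

namespace TransAux

variable {K : Type*} [Field K] [Fintype K]

lemma mulVec_surj {ι κ : Type*} [Fintype ι] [Fintype κ] (H : Matrix ι κ K)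
    (hinj : ∀ y : ι → K, H.transpose.mulVec y = 0 → y = 0) (b : ι → K) :
    ∃ x, H.mulVec x = b := by
  have h1 : Function.Injective H.transpose.mulVecLin := by
    rw [← LinearMap.ker_eq_bot, LinearMap.ker_eq_bot']
    intro y hy
    exact hinj y hy
  have h2 : H.transpose.rank = Fintype.card ι := by
    unfold Matrix.rank
    rw [LinearMap.finrank_range_of_inj h1, Module.finrank_fintype_fun_eq_card]
  rw [Matrix.rank_transpose] at h2
  have h3 : LinearMap.range H.mulVecLin = ⊤ := by
    apply Submodule.eq_top_of_finrank_eq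
    rw [Module.finrank_fintype_fun_eq_card]
    exact h2
  obtain ⟨x, hx⟩ := LinearMap.range_eq_top.mp h3 b
  exact ⟨x, hx⟩

lemma polyF_add (P Q : Polynomial K) : polyF (P + Q) = polyF P + polyF Q :=
  map_add (Polynomial.aeval (HahnSeries.single (-1 : ℤ) (1 : K))) P Q

lemma polyF_zero : polyF (0 : Polynomial K) = 0 :=
  map_zero (Polynomial.aeval (HahnSeries.single (-1 : ℤ) (1 : K)))

lemma polyF_sum {ι : Type*} (s : Finset ι) (P : ι → Polynomial K) :
    polyF (∑ i ∈ s, P i) = ∑ i ∈ s, polyF (P i) :=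
  map_sum (AddMonoidHom.mk' (polyF (K := K)) polyF_add) P s

lemma toL_sum {ι : Type*} (s : Finset ι) (x : ι → FF K) :
    toL (∑ i ∈ s, x i) = ∑ i ∈ s, toL (x i) :=
  map_sum (AddMonoidHom.mk' (toL (K := K)) toL_add) x s

lemma cf_sum {ι : Type*} (s : Finset ι) (x : ι → FF K) (l : ℤ) :
    (toL (∑ i ∈ s, x i)).coeff l = ∑ i ∈ s, (toL (x i)).coeff l := by
  rw [toL_sum, HahnSeries.coeff_sum]

lemma polyF_monomial (a : ℕ) (c : K) :
    toL (polyF (Polynomial.monomial a c)) = HahnSeries.single (-(a : ℤ)) c := by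
  show Polynomial.aeval (HahnSeries.single (-1 : ℤ) (1 : K)) (Polynomial.monomial a c) = _
  rw [Polynomial.aeval_monomial, HahnSeries.single_pow, HahnSeries.algebraMap_apply',
    PowerSeries.algebraMap_apply, HahnSeries.ofPowerSeries_C, HahnSeries.C_apply,
    HahnSeries.single_mul_single]
  simp

/-- the polynomial with given coefficients -/
def mk {t : ℕ} (c : Fin t → K) : Polynomial K := ∑ a : Fin t, Polynomial.monomial (a : ℕ) (c a)

lemma mk_coeff {t : ℕ} (c : Fin t → K) (a : Fin t) : (mk c).coeff a = c a := by
  unfold mk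
  rw [Polynomial.finsetSum_coeff]
  simp [Polynomial.coeff_monomial, Fin.val_inj]

lemma cf_mul_mk (α : FF K) {t : ℕ} (c : Fin t → K) (l : ℤ) :
    (toL (α * polyF (mk c))).coeff l = ∑ a : Fin t, (toL α).coeff (l + a) * c a := by
  unfold mk
  rw [polyF_sum, Finset.mul_sum, cf_sum]
  refine Finset.sum_congr rfl fun a _ => ?_
  show (toL α * toL (polyF _)).coeff l = _
  rw [polyF_monomial, HahnSeries.coeff_mul_single, sub_neg_eq_add]

lemma fnorm_le {x : FF K} {N : ℤ} (hx : ∀ i < N, (toL x).coeff i = 0) :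
    fnorm x ≤ (Fintype.card K : ℝ) ^ (-N) := by
  unfold fnorm
  split_ifs with h
  · positivity
  · apply zpow_le_zpow_right₀ one_le_q
    have := (HahnSeries.le_order_iff_forall h).mpr hx
    omega

lemma pnorm_mk_le {ι : Type*} [Fintype ι] [Nonempty ι] {t : ℕ} (c : ι → Fin t → K) :
    pnorm (fun i => mk (c i)) ≤ (Fintype.card K : ℝ) ^ (t : ℤ) := by
  unfold pnorm vnorm
  refine ciSup_le fun i => ?_
  have : fnorm (polyF (mk (c i))) ≤ (Fintype.card K : ℝ) ^ (-(-(t : ℤ))) := by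
    refine fnorm_le fun l hl => ?_
    unfold mk
    rw [polyF_sum, cf_sum]
    refine Finset.sum_eq_zero fun a _ => ?_
    rw [polyF_monomial, HahnSeries.coeff_single_of_ne]
    have := a.2
    omega
  simpa using this

lemma cf_intPoly (x : FF K) {l : ℤ} (hl : l ≤ 0) :
    (toL (polyF (intPoly x))).coeff l = (toL x).coeff l := by
  unfold intPoly
  rw [polyF_sum, cf_sum]
  obtain ⟨k, rfl⟩ : ∃ k : ℕ, l = -(k : ℤ) := ⟨(-l).toNat, by omega⟩
  simp only [polyF_monomial, HahnSeries.coeff_single]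
  by_cases hk : k < (-(toL x).order).toNat + 1
  · rw [Finset.sum_eq_single_of_mem k (by simpa using hk)]
    · simp
    · intro b _ hb
      rw [if_neg]; omega
  · rw [Finset.sum_eq_zero, HahnSeries.coeff_eq_zero_of_lt_order]
    · omega
    · intro b hb
      rw [Finset.mem_range] at hb
      rw [if_neg]; omega

lemma cf_intPoly_pos (x : FF K) {l : ℤ} (hl : 0 < l) :
    (toL (polyF (intPoly x))).coeff l = 0 := by
  unfold intPoly
  rw [polyF_sum, cf_sum]
  refine Finset.sum_eq_zero fun a _ => ?_
  rw [polyF_monomial, HahnSeries.coeff_single_of_ne]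
  omega

lemma fnorm_sub_intPoly_le {x : FF K} {N : ℕ}
    (hx : ∀ k : Fin N, (toL x).coeff ((k : ℤ) + 1) = 0) :
    fnorm (x - polyF (intPoly x)) ≤ (Fintype.card K : ℝ) ^ (-((N : ℤ) + 1)) := by
  refine fnorm_le fun l hl => ?_
  rw [toL_sub, HahnSeries.coeff_sub]
  rcases le_or_gt l 0 with h | h
  · rw [cf_intPoly x h, sub_self]
  · rw [cf_intPoly_pos x h, sub_zero]
    have := hx ⟨(l - 1).toNat, by omega⟩
    rw [← this]
    congr 1
    simp only
    omega

lemma sdist_le {x : FF K} {N : ℕ} (hx : ∀ k : Fin N, (toL x).coeff ((k : ℤ) + 1) = 0) :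
    sdist x ≤ (Fintype.card K : ℝ) ^ (-((N : ℤ) + 1)) := by
  unfold sdist
  refine (ciInf_le ⟨0, ?_⟩ (intPoly x)).trans (fnorm_sub_intPoly_le hx)
  rintro _ ⟨y, rfl⟩
  exact fnorm_nonneg _

lemma vdist_le {ι : Type*} [Fintype ι] [Nonempty ι] {v : ι → FF K} {N : ℕ}
    (hx : ∀ i, ∀ k : Fin N, (toL (v i)).coeff ((k : ℤ) + 1) = 0) :
    vdist v ≤ (Fintype.card K : ℝ) ^ (-((N : ℤ) + 1)) := by
  unfold vdist
  refine (ciInf_le ⟨0, ?_⟩ (fun i => intPoly (v i))).trans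
    (ciSup_le fun i => fnorm_sub_intPoly_le (hx i))
  rintro _ ⟨y, rfl⟩
  exact Real.iSup_nonneg fun i => fnorm_nonneg _

lemma one_lt_q : (1 : ℝ) < (Fintype.card K : ℝ) := by
  exact_mod_cast Fintype.one_lt_card

lemma cf_mulVec {ι κ : Type*} [Fintype κ] (A : Matrix ι κ (FF K)) {t : ℕ}
    (c : κ → Fin t → K) (i : ι) (l : ℤ) :
    (toL (A.mulVec (fun j => polyF (mk (c j))) i)).coeff l =
      ∑ p : κ × Fin t, (toL (A i p.1)).coeff (l + (p.2 : ℕ)) * c p.1 p.2 := by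
  rw [Fintype.sum_prod_type]
  show (toL (∑ j, A i j * polyF (mk (c j)))).coeff l = _
  rw [cf_sum]
  exact Finset.sum_congr rfl fun j _ => cf_mul_mk _ _ _

end TransAux

open TransAux in

/-- Transference lemma (Lemma 4.3 of the paper): if `M(y) = ⟨Aᵀ y⟩ ≥ q^{-t}` for every
nonzero polynomial vector `y` with `‖y‖ ≤ q^s`, then for every `θ ∈ 𝔽_q((z⁻¹))ⁿ` there
is a polynomial vector `x` with `‖x‖ ≤ q^t` and `max_i ⟨L_i(x) - θ_i⟩ ≤ q^{-s}`. -/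
theorem transference_lemma {K : Type*} [Field K] [Fintype K] {m n : ℕ}
    (hm : 0 < m) (hn : 0 < n)
    (A : Matrix (Fin n) (Fin m) (FF K)) (s t : ℕ) (hs : 0 < s) (ht : 0 < t)
    (h : ∀ y : Fin n → Polynomial K, y ≠ 0 → pnorm y ≤ (Fintype.card K : ℝ) ^ (s : ℤ) →
      (Fintype.card K : ℝ) ^ (-(t : ℤ)) ≤ Mfun A y) :
    ∀ θ : Fin n → FF K, ∃ x : Fin m → Polynomial K,
      pnorm x ≤ (Fintype.card K : ℝ) ^ (t : ℤ) ∧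
      (⨆ i, sdist (A.mulVec (fun j => polyF (x j)) i - θ i)) ≤
        (Fintype.card K : ℝ) ^ (-(s : ℤ)) := by
  intro θ
  have : Nonempty (Fin m) := ⟨⟨0, hm⟩⟩
  have : Nonempty (Fin n) := ⟨⟨0, hn⟩⟩
  let H : Matrix (Fin n × Fin s) (Fin m × Fin t) K :=
    fun p r => (toL (A p.1 r.1)).coeff (((p.2 : ℕ) : ℤ) + 1 + ((r.2 : ℕ) : ℤ))
  obtain ⟨x, hx⟩ := mulVec_surj H (by
    intro y hy
    by_contra hy0
    have hne : (fun i => mk (fun k => y (i, k))) ≠ 0 := by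
      intro h0
      apply hy0
      funext p
      have h1 := congrFun h0 p.1
      have h2 := mk_coeff (fun k => y (p.1, k)) p.2
      change mk (fun k => y (p.1, k)) = 0 at h1
      rw [h1] at h2
      simpa using h2.symm
    have h1 := h _ hne (pnorm_mk_le (fun i k => y (i, k)))
    have h2 : Mfun A (fun i => mk (fun k => y (i, k))) ≤
        (Fintype.card K : ℝ) ^ (-((t : ℤ) + 1)) := by
      refine vdist_le fun j a => ?_
      rw [cf_mulVec A.transpose (fun i k => y (i, k))]
      have h3 := congrFun hy (j, a)
      rw [Pi.zero_apply] at h3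
      rw [← h3]
      refine Finset.sum_congr rfl fun p _ => ?_
      show _ = (toL (A p.1 j)).coeff _ * y p
      rw [Matrix.transpose_apply]
      congr 2
      ring
    have h3 := zpow_lt_zpow_right₀ (one_lt_q (K := K)) (show -((t : ℤ) + 1) < -(t : ℤ) by omega)
    linarith) (fun p => (toL (θ p.1)).coeff (((p.2 : ℕ) : ℤ) + 1))
  refine ⟨fun j => mk (fun a => x (j, a)), pnorm_mk_le _, ciSup_le fun i => ?_⟩
  refine (sdist_le (N := s) fun k => ?_).trans (zpow_le_zpow_right₀ one_le_q (by omega))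
  rw [toL_sub, HahnSeries.coeff_sub, cf_mulVec A (fun j a => x (j, a)), sub_eq_zero]
  exact congrFun hx (i, k)
end
end
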